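/- Let X_i, i ∈ I, be pairwise disjoint σ-scattered CSB linear orders. If the sequence of order types ⟨otp(X_i) : i ∈ I⟩ is finite-to-one, i.e. there is no infinite J ⊆ I such that X_i ≅ X_j for all i, j ∈ J, then the disjoint union ⋃_{i∈I} X_i is a reversible poset. -/

import Mathlib

universe u v w

section Defs

variable {α : Type*} {β : Type*}

/-- `f` is a homomorphism from `⟨α, r⟩` to `⟨β, s⟩`. -/
def IsHom (r : α → α → Prop) (s : β → β → Prop) (f : α → β) : Prop :=
  ∀ x y, r x y → s (f x) (f y)

/-- A condensation is a bijective homomorphism. -/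
def IsCond (r : α → α → Prop) (s : β → β → Prop) (f : α → β) : Prop :=
  Function.Bijective f ∧ IsHom r s f

/-- A monomorphism is an injective homomorphism. -/
def IsMono (r : α → α → Prop) (s : β → β → Prop) (f : α → β) : Prop :=
  Function.Injective f ∧ IsHom r s f

/-- An isomorphism of binary structures. -/
def IsIso (r : α → α → Prop) (s : β → β → Prop) (f : α → β) : Prop :=
  Function.Bijective f ∧ ∀ x y, r x y ↔ s (f x) (f y)

/-- A binary structure is reversible iff every self-condensation is an automorphism. -/
def Reversible (r : α → α → Prop) : Prop :=
  ∀ f : α → α, IsCond r r f → IsIso r r f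

/-- A binary structure is connected iff it has exactly one component: it is nonempty and
the least equivalence relation containing `r` relates any two points. -/
def Connected (r : α → α → Prop) : Prop :=
  Nonempty α ∧ ∀ x y, Relation.EqvGen r x y

/-- The relation of the disjoint union of the structures `⟨X i, R i⟩`. -/
def unionRel {I : Type*} {X : I → Type*} (R : ∀ i, X i → X i → Prop) :
    (Σ i, X i) → (Σ i, X i) → Prop :=
  fun a b => ∃ h : a.1 = b.1, R b.1 (h ▸ a.2) b.2

end Defs

/-- An embedding between binary structures (for linear orders regarded as structures
`⟨L, <⟩`, an injective map with `x < y ↔ f x < f y`). -/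
def EmbedsIn {α β : Type*} (r : α → α → Prop) (s : β → β → Prop) : Prop :=
  ∃ f : α → β, Function.Injective f ∧ ∀ x y, r x y ↔ s (f x) (f y)

/-- A linearly ordered set `⟨L, r⟩` is scattered iff the rationals do not embed into it. -/
def Scattered (L : Type*) (r : L → L → Prop) : Prop :=
  ¬ EmbedsIn ((· < ·) : ℚ → ℚ → Prop) r

/-- `⟨L, r⟩` is σ-scattered iff it is the union of at most countably many scattered
suborders. -/
def SigmaScattered (L : Type*) (r : L → L → Prop) : Prop :=
  ∃ S : ℕ → Set L, (⋃ n, S n) = Set.univ ∧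
    ∀ n, Scattered (S n) (fun a b => r a.1 b.1)

/-- A linear order `⟨L, r⟩` is Cantor–Schröder–Bernstein (CSB) iff every linear order
bi-embeddable with it is isomorphic to it. -/
def CSB (L : Type u) (r : L → L → Prop) : Prop :=
  ∀ (L' : Type u) (r' : L' → L' → Prop), IsStrictTotalOrder L' r' →
    EmbedsIn r r' → EmbedsIn r' r →
    ∃ f : L → L', Function.Bijective f ∧ ∀ x y, r x y ↔ r' (f x) (f y)

/-!
A condensation of the union maps each component strictly monotonically into another one, which
gives a surjection `σ` of the index set with `X i` embedding into `X (σ i)`. If `τ` is a right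
inverse of `σ`, the orbit `i, τ i, τ (τ i), …` carries a chain of orders each embedding into the
previous one.

σ-scattered CSB orders are tame: finite sums of surordinals and reversed surordinals, a class which
is well-quasi-ordered by embeddability thanks to Higman's lemma. Hence along an infinite orbit the
orders would eventually be bi-embeddable, so isomorphic, against the finite-to-one hypothesis.
So the orbits of `τ` are finite, `σ` is injective, and the condensation is an isomorphism.

For tameness, let `L` be σ-scattered and not tame. Every non-tame convex set contains a core, a
non-tame convex set which still embeds into itself after copies of `ω + 1 + ω*` have been inserted
at points found in all of its non-tame convex parts. Replacing the two-sided limits in a maximal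
disjoint family of cores by pairs of points gives an order bi-embeddable with `L` in which every
non-tame convex set has a non-tame convex subset without two-sided limits. Inserting the copies of
`ω + 1 + ω*` into a single core gives a bi-embeddable order without this property. If `L` were CSB,
both would be isomorphic to `L`.
-/

open Set OrderDual

/-! ### Embeddings between subsets of linear orders -/

section Embeds

variable {α β γ ι : Type*} [LinearOrder α] [LinearOrder β] [LinearOrder γ] [LinearOrder ι]

/-- `Embeds s t`: the suborder `s` of `α` embeds into the suborder `t` of `β`. The embedding is
encoded as a map on all of `α`, of which only the values on `s` matter. -/
def Embeds (s : Set α) (t : Set β) : Prop :=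
  ∃ f : α → β, StrictMonoOn f s ∧ MapsTo f s t

namespace Embeds

theorem of_subset {s t : Set α} (h : s ⊆ t) : Embeds s t :=
  ⟨id, strictMonoOn_id, h⟩

theorem trans {s : Set α} {t : Set β} {u : Set γ} : Embeds s t → Embeds t u → Embeds s u := by
  rintro ⟨f, hf, hft⟩ ⟨g, hg, hgu⟩
  exact ⟨g ∘ f, hg.comp hf hft, hgu.comp hft⟩

theorem mono {s s' : Set α} {t t' : Set β} (h : Embeds s t) (hs : s' ⊆ s) (ht : t ⊆ t') :
    Embeds s' t' :=
  (of_subset hs).trans (h.trans (of_subset ht))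

theorem of_strictMono {f : α → β} (hf : StrictMono f) {s : Set α} {t : Set β}
    (h : MapsTo f s t) : Embeds s t :=
  ⟨f, hf.strictMonoOn s, h⟩

theorem of_subsingleton {s : Set α} (hs : s.Subsingleton) {t : Set β} (ht : t.Nonempty) :
    Embeds s t := by
  obtain ⟨b, hb⟩ := ht
  exact ⟨fun _ => b, fun x hx y hy hxy => absurd (hs hx hy) hxy.ne, fun _ _ => hb⟩

theorem of_monotoneOn_fibers [Nonempty β] {s : Set α} {t : Set β} {p : α → ι}
    (hp : MonotoneOn p s) (T : ι → Set β) (hTt : ∀ x ∈ s, T (p x) ⊆ t)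
    (hT : ∀ x ∈ s, ∀ y ∈ s, p x < p y → ∀ a ∈ T (p x), ∀ b ∈ T (p y), a < b)
    (h : ∀ x ∈ s, Embeds {y ∈ s | p y = p x} (T (p x))) : Embeds s t := by
  have h' : ∀ i ∈ p '' s, Embeds {y ∈ s | p y = i} (T i) := forall_mem_image.2 h
  choose! f hf hfT using h'
  have hmem : ∀ x ∈ s, f (p x) x ∈ T (p x) := fun x hx => hfT _ (mem_image_of_mem p hx) ⟨hx, rfl⟩
  refine ⟨fun x => f (p x) x, fun x hx y hy hxy => ?_, fun x hx => hTt x hx (hmem x hx)⟩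
  rcases (hp hx hy hxy.le).lt_or_eq with hlt | heq
  · exact hT x hx y hy hlt _ (hmem x hx) _ (hmem y hy)
  · simpa only [heq] using hf _ (mem_image_of_mem p hy) ⟨hx, heq⟩ ⟨hy, rfl⟩ hxy

theorem union {s₁ s₂ : Set α} {t₁ t₂ : Set β} (h₁ : Embeds s₁ t₁) (h₂ : Embeds s₂ t₂)
    (hs : ∀ a ∈ s₁, ∀ b ∈ s₂, a < b) (ht : ∀ a ∈ t₁, ∀ b ∈ t₂, a < b) :
    Embeds (s₁ ∪ s₂) (t₁ ∪ t₂) := by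
  classical
  obtain ⟨f, hf, hft⟩ := h₁
  obtain ⟨g, hg, hgt⟩ := h₂
  have hn : ∀ x ∈ s₂, x ∉ s₁ := fun x hx hx' => (hs x hx' x hx).false
  refine ⟨fun x => if x ∈ s₁ then f x else g x, ?_, ?_⟩
  · rintro x (hx | hx) y (hy | hy) hxy
    · simpa [hx, hy] using hf hx hy hxy
    · simpa [hx, hn y hy] using ht _ (hft hx) _ (hgt hy)
    · exact absurd hxy (hs _ hy _ hx).asymm
    · simpa [hn x hx, hn y hy] using hg hx hy hxy
  · rintro x (hx | hx)
    · simpa [hx] using Or.inl (hft hx)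
    · simpa [hn x hx] using Or.inr (hgt hx)

theorem dual {s : Set α} {t : Set β} (h : Embeds s t) : Embeds (ofDual ⁻¹' s) (ofDual ⁻¹' t) := by
  obtain ⟨f, hf, hft⟩ := h
  exact ⟨toDual ∘ f ∘ ofDual, fun _ hx _ hy hxy => hf hy hx hxy, hft⟩

theorem of_dual {s : Set α} {t : Set β} (h : Embeds (ofDual ⁻¹' s) (ofDual ⁻¹' t)) :
    Embeds s t :=
  h.dual

end Embeds

end Embeds

/-! ### Finite sums of surordinals and reversed surordinals -/

section Surordinal

variable {α β : Type*} [LinearOrder α] [LinearOrder β]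

/-- A surordinal is a linear order all of whose principal final segments are well-ordered. -/
def IsSurordinal (s : Set α) : Prop :=
  ∀ x ∈ s, (s ∩ Ici x).WellFoundedOn (· < ·)

/-- A linear order whose dual is a surordinal. -/
def IsRevSurordinal (s : Set α) : Prop :=
  ∀ x ∈ s, (s ∩ Iic x).WellFoundedOn (· > ·)

/-- `s` is *tame* if it is a finite ordered sum of surordinals and reversed surordinals. The
σ-scattered CSB orders will turn out to be tame. -/
inductive IsTame : Set α → Prop
  | sur {s : Set α} : IsSurordinal s → IsTame s
  | rev {s : Set α} : IsRevSurordinal s → IsTame s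
  | union {s t : Set α} : IsTame s → IsTame t → (∀ a ∈ s, ∀ b ∈ t, a < b) → IsTame (s ∪ t)

theorem wellFoundedOn_lt_of_strictMonoOn {s : Set α} {t : Set β} (ht : t.WellFoundedOn (· < ·))
    {f : α → β} (hf : StrictMonoOn f s) (hft : MapsTo f s t) : s.WellFoundedOn (· < ·) :=
  (InvImage.wf (hft.restrict f s t) ht).mono fun x y h => hf x.2 y.2 h

theorem IsSurordinal.dual {s : Set α} (h : IsSurordinal s) : IsRevSurordinal (ofDual ⁻¹' s) :=
  h

theorem IsRevSurordinal.dual {s : Set α} (h : IsRevSurordinal s) : IsSurordinal (ofDual ⁻¹' s) :=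
  h

theorem IsSurordinal.of_embeds {s : Set α} {t : Set β} (ht : IsSurordinal t) (h : Embeds s t) :
    IsSurordinal s := by
  obtain ⟨f, hf, hft⟩ := h
  exact fun x hx => wellFoundedOn_lt_of_strictMonoOn (ht (f x) (hft hx)) (hf.mono inter_subset_left)
    fun y hy => ⟨hft hy.1, hf.monotoneOn hx hy.1 hy.2⟩

theorem IsRevSurordinal.of_embeds {s : Set α} {t : Set β} (ht : IsRevSurordinal t)
    (h : Embeds s t) : IsRevSurordinal s :=
  (ht.dual.of_embeds h.dual).dual

namespace IsTame

theorem of_embeds {s : Set α} {t : Set β} (ht : IsTame t) (h : Embeds s t) : IsTame s := by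
  induction ht generalizing s with
  | sur ht => exact .sur (ht.of_embeds h)
  | rev ht => exact .rev (ht.of_embeds h)
  | @union t₁ t₂ _ _ hlt ih₁ ih₂ =>
    obtain ⟨f, hf, hft⟩ := h
    have hs : s = (s ∩ f ⁻¹' t₁) ∪ (s ∩ f ⁻¹' t₂) := by
      rw [← inter_union_distrib_left, ← preimage_union]
      exact (inter_eq_left.2 hft).symm
    rw [hs]
    refine .union (ih₁ ⟨f, hf.mono inter_subset_left, fun x hx => hx.2⟩)
      (ih₂ ⟨f, hf.mono inter_subset_left, fun x hx => hx.2⟩) fun x hx y hy => ?_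
    exact (hf.lt_iff_lt hx.1 hy.1).1 (hlt _ hx.2 _ hy.2)

theorem mono {s t : Set α} (ht : IsTame t) (h : s ⊆ t) : IsTame s :=
  ht.of_embeds (.of_subset h)

theorem of_subsingleton {s : Set α} (hs : s.Subsingleton) : IsTame s :=
  .sur fun _ _ => (hs.anti inter_subset_left).wellFoundedOn

theorem dual {s : Set α} (h : IsTame s) : IsTame (ofDual ⁻¹' s) := by
  induction h with
  | sur h => exact .rev h.dual
  | rev h => exact .sur h.dual
  | union _ _ hlt ih₁ ih₂ =>
    rw [preimage_union, union_comm]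
    exact .union ih₂ ih₁ fun x hx y hy => hlt _ hy _ hx

theorem of_dual {s : Set α} (h : IsTame (ofDual ⁻¹' s)) : IsTame s :=
  h.dual

theorem exists_wellFoundedOn_Icc {s : Set α} (h : IsTame s) {y : ℕ → α} (hy : Monotone y)
    (hs : ∀ n, Icc (y n) (y (n + 1)) ⊆ s) :
    ∃ n, (Icc (y n) (y (n + 1))).WellFoundedOn (· < ·) ∨
      (Icc (y n) (y (n + 1))).WellFoundedOn (· > ·) := by
  have hle : ∀ n, y n ≤ y (n + 1) := fun n => hy n.le_succ
  induction h generalizing y with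
  | sur h =>
    exact ⟨0, .inl ((h _ (hs 0 (left_mem_Icc.2 (hle 0)))).subset fun x hx => ⟨hs 0 hx, hx.1⟩)⟩
  | rev h =>
    exact ⟨0, .inr ((h _ (hs 0 (right_mem_Icc.2 (hle 0)))).subset fun x hx => ⟨hs 0 hx, hx.2⟩)⟩
  | @union s₁ s₂ _ _ hlt ih₁ ih₂ =>
    by_cases h : ∀ n, y n ∈ s₁
    · exact ih₁ hy (fun n x hx => (hs n hx).resolve_right fun hx₂ =>
        (hlt _ (h (n + 1)) _ hx₂).not_ge hx.2) hle
    · obtain ⟨k, hk⟩ := not_forall.1 h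
      have hk₂ : y k ∈ s₂ := (hs k (left_mem_Icc.2 (hle k))).resolve_left hk
      obtain ⟨n, hn⟩ := ih₂ (y := fun n => y (k + n)) (fun m n h => hy (by lia))
        (fun n x hx => (hs (k + n) hx).resolve_left fun hx₁ =>
          (hlt _ hx₁ _ hk₂).not_ge ((hy (by lia)).trans hx.1)) fun n => hle _
      exact ⟨k + n, hn⟩

end IsTame

/-- `x` is a limit of elements on both of its sides. The number of such points separates the tame
orders from the others. -/
def IsTwoSidedLimit (x : α) : Prop :=
  Order.IsSuccLimit x ∧ Order.IsPredLimit x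

theorem IsTwoSidedLimit.dual {x : α} (h : IsTwoSidedLimit x) : IsTwoSidedLimit (toDual x) :=
  ⟨h.2.dual, h.1.dual⟩

theorem IsSurordinal.not_isPredLimit {s : Set α} (h : IsSurordinal s) (hs : s.OrdConnected)
    {x y : α} (hx : x ∈ s) (hy : y ∈ s) (hxy : x < y) : ¬Order.IsPredLimit x := by
  intro hlim
  obtain ⟨m, hm, hmin⟩ := ((h x hx).subset (s := Ioc x y)
    fun z hz => ⟨hs.out hx hy (Ioc_subset_Icc_self hz), hz.1.le⟩).exists_minimal ⟨y, hxy, le_rfl⟩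
  obtain ⟨z, hxz, hzm⟩ := (hlim.lt_iff_exists_lt).1 hm.1
  exact (hmin ⟨hxz, hzm.le.trans hm.2⟩ hzm.le).not_gt hzm

theorem IsSurordinal.subsingleton_isTwoSidedLimit {s : Set α} (h : IsSurordinal s)
    (hs : s.OrdConnected) : (s ∩ {x | IsTwoSidedLimit x}).Subsingleton := by
  refine fun x hx y hy => le_antisymm (not_lt.1 fun hlt => ?_) (not_lt.1 fun hlt => ?_)
  · exact h.not_isPredLimit hs hy.1 hx.1 hlt hy.2.2
  · exact h.not_isPredLimit hs hx.1 hy.1 hlt hx.2.2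

theorem ordConnected_left_of_union {s t : Set α} (hst : (s ∪ t).OrdConnected)
    (hlt : ∀ a ∈ s, ∀ b ∈ t, a < b) : s.OrdConnected :=
  ⟨fun _ hx y hy _ hz => (hst.out (.inl hx) (.inl hy) hz).resolve_right fun h =>
    (hlt y hy _ h).not_ge hz.2⟩

theorem ordConnected_right_of_union {s t : Set α} (hst : (s ∪ t).OrdConnected)
    (hlt : ∀ a ∈ s, ∀ b ∈ t, a < b) : t.OrdConnected :=
  ⟨fun x hx _ hy _ hz => (hst.out (.inr hx) (.inr hy) hz).resolve_left fun h =>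
    (hlt _ h x hx).not_ge hz.1⟩

theorem IsTame.finite_isTwoSidedLimit {s : Set α} (h : IsTame s) (hs : s.OrdConnected) :
    (s ∩ {x | IsTwoSidedLimit x}).Finite := by
  induction h with
  | sur h => exact (h.subsingleton_isTwoSidedLimit hs).finite
  | rev h =>
    have hsub := h.dual.subsingleton_isTwoSidedLimit hs.dual
    exact Set.Subsingleton.finite fun x hx y hy => hsub ⟨hx.1, hx.2.dual⟩ ⟨hy.1, hy.2.dual⟩
  | union _ _ hlt ih₁ ih₂ =>
    rw [union_inter_distrib_right]
    exact (ih₁ (ordConnected_left_of_union hs hlt)).union (ih₂ (ordConnected_right_of_union hs hlt))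

end Surordinal

/-! ### Tame orders are well-quasi-ordered -/

section WellQuasiOrder

variable {α β : Type v} [LinearOrder α] [LinearOrder β]

open Classical in
/-- The order type of a well-ordered set, with the junk value `0` on all other sets. -/
noncomputable def otp (s : Set α) : Ordinal.{v} :=
  if h : s.WellFoundedOn (· < ·) then
    @Ordinal.type s (· < ·) { wf := h, toTrichotomous := inferInstance } else 0

theorem otp_le_otp_iff [Nonempty β] {s : Set α} {t : Set β} (hs : s.WellFoundedOn (· < ·))
    (ht : t.WellFoundedOn (· < ·)) : otp s ≤ otp t ↔ Embeds s t := by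
  classical
  let _ : IsWellOrder s (· < ·) := { wf := hs, toTrichotomous := inferInstance }
  let _ : IsWellOrder t (· < ·) := { wf := ht, toTrichotomous := inferInstance }
  rw [otp, otp, dif_pos hs, dif_pos ht, Ordinal.type_le_iff']
  constructor
  · rintro ⟨f⟩
    refine ⟨fun x => if h : x ∈ s then f ⟨x, h⟩ else Classical.arbitrary β, ?_, ?_⟩
    · intro x hx y hy hxy
      simpa [hx, hy] using f.map_rel_iff.2 (show (⟨x, hx⟩ : s) < ⟨y, hy⟩ from hxy)
    · intro x hx
      simp [hx]
  · rintro ⟨f, hf, hft⟩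
    exact ⟨RelEmbedding.ofMonotone (hft.restrict f s t) fun a b h => hf a.2 b.2 h⟩

/-- The rank of a surordinal: the least ordinal above the order types of all of its principal final
segments. -/
noncomputable def surRank (s : Set α) : Ordinal.{v} :=
  ⨆ x : s, Order.succ (otp (s ∩ Ici (x : α)))

theorem otp_lt_surRank {s : Set α} {x : α} (hx : x ∈ s) : otp (s ∩ Ici x) < surRank s :=
  Ordinal.lt_iSup_iff.2 ⟨⟨x, hx⟩, Order.lt_succ _⟩

theorem surRank_mono {s t : Set α} (ht : IsSurordinal t) (h : s ⊆ t) :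
    surRank s ≤ surRank t := by
  refine Ordinal.iSup_le_iff.2 fun x => Order.succ_le_of_lt ?_
  have : Nonempty α := ⟨x⟩
  have hsub : s ∩ Ici (x : α) ⊆ t ∩ Ici (x : α) := inter_subset_inter_left _ h
  have hwf := ht x (h x.2)
  exact ((otp_le_otp_iff (hwf.subset hsub) hwf).2 (.of_subset hsub)).trans_lt
    (otp_lt_surRank (h x.2))

/-- A tail is a nonempty surordinal all of whose initial segments have the same rank; in particular
it has no least element. -/
structure IsTail (s : Set α) : Prop where
  isSurordinal : IsSurordinal s
  nonempty : s.Nonempty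
  surRank_inter_Iio : ∀ x ∈ s, surRank (s ∩ Iio x) = surRank s

namespace IsTail

theorem exists_embeds_inter_Ici {s : Set α} {t : Set β} (hs : IsTail s) (ht : IsTail t)
    (h : surRank s ≤ surRank t) {x : α} (hx : x ∈ s) {z : β} (hz : z ∈ t) :
    ∃ z' ∈ t, z' < z ∧ Embeds (s ∩ Ici x) (t ∩ Ico z' z) := by
  have : Nonempty β := ⟨z⟩
  have hlt : otp (s ∩ Ici x) < surRank (t ∩ Iio z) :=
    (otp_lt_surRank hx).trans_le (h.trans (ht.surRank_inter_Iio z hz).ge)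
  obtain ⟨⟨z', hz', hz'z⟩, hle⟩ := Ordinal.lt_iSup_iff.1 hlt
  have hwf : (t ∩ Iio z ∩ Ici z').WellFoundedOn (· < ·) :=
    (ht.isSurordinal z' hz').subset (inter_subset_inter_left _ inter_subset_left)
  refine ⟨z', hz', hz'z, ?_⟩
  exact ((otp_le_otp_iff (hs.isSurordinal x hx) hwf).1 (Order.lt_succ_iff.1 hle)).mono
    Subset.rfl fun w hw => ⟨hw.1.1, hw.2, hw.1.2⟩

theorem exists_lt {s : Set α} (hs : IsTail s) {x : α} (hx : x ∈ s) : ∃ y ∈ s, y < x :=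
  let ⟨y, hy, hyx, _⟩ := hs.exists_embeds_inter_Ici hs le_rfl hx hx
  ⟨y, hy, hyx⟩

theorem exists_coinitial_seq {s : Set α} (hs : IsTail s) :
    ∃ x : ℕ → α, (∀ n, x n ∈ s) ∧ ∀ y ∈ s, ∃ n, x n ≤ y := by
  choose g hgs hg using fun x : s => hs.exists_lt x.2
  obtain ⟨x₀, hx₀⟩ := hs.nonempty
  let x : ℕ → s := fun n => Nat.rec ⟨x₀, hx₀⟩ (fun _ y => ⟨g y, hgs y⟩) n
  refine ⟨fun n => (x n).1, fun n => (x n).2, fun y hy => ?_⟩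
  by_contra! hlt
  exact (RelEmbedding.wellFounded_iff_isEmpty.1 (hs.isSurordinal y hy)).false
    (RelEmbedding.natGT (fun n => (⟨(x n).1, (x n).2, (hlt n).le⟩ : ↥(s ∩ Ici y)))
      fun n => hg (x n))

/-- The successive pieces `s ∩ [x (n + 1), x n)` of a coinitial sequence `x` of `s` are embedded one
below the other, which is possible because every initial segment of `t` has full rank. -/
theorem embeds {s : Set α} {t : Set β} (hs : IsTail s) (ht : IsTail t)
    (h : surRank s ≤ surRank t) : Embeds s t := by
  obtain ⟨x, hxs, hx⟩ := hs.exists_coinitial_seq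
  obtain ⟨z₀, hz₀⟩ := ht.nonempty
  have : Nonempty β := ⟨z₀⟩
  choose g hgt hg hge using fun (n : ℕ) (z : t) => hs.exists_embeds_inter_Ici ht h (hxs n) z.2
  let z : ℕ → t := fun n => Nat.rec ⟨z₀, hz₀⟩ (fun n w => ⟨g n w, hgt n w⟩) n
  have hz : Antitone z := antitone_nat_of_succ_le fun n => (hg n (z n)).le
  let N : α → ℕ := fun y => sInf {n | x n ≤ y}
  have hN : ∀ y ∈ s, x (N y) ≤ y := fun y hy => Nat.sInf_mem (hx y hy)
  refine .of_monotoneOn_fibers (ι := ℕᵒᵈ) (p := fun y => toDual (N y))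
    (fun y hy y' _ hyy' => Nat.sInf_le ((hN y hy).trans hyy'))
    (fun n => t ∩ Ico (z (ofDual n + 1)).1 (z (ofDual n)).1) (fun _ _ => inter_subset_left) ?_ ?_
  · intro y _ y' _ hlt a ha b hb
    have hle : N y' + 1 ≤ N y := hlt
    exact ha.2.2.trans_le (le_trans (hz hle) hb.2.1)
  · intro y _
    refine (hge (N y) (z (N y))).mono (fun y' ⟨hy', hyy'⟩ => ⟨hy', ?_⟩) Subset.rfl
    exact (congrArg x (hyy' : N y' = N y)).ge.trans (hN y' hy')

end IsTail

/-- An atom is a well-ordered set or a tail, or the dual of one of these. Its code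
`(reversed, tail, o)` records which of the four it is and its order type or rank `o`. -/
abbrev AtomCode : Type (v + 1) :=
  Bool × Bool × Ordinal.{v}

/-- Atoms with codes `c ≤ d` embed into each other; the two flags have to agree. -/
def AtomCode.Le (c d : AtomCode.{v}) : Prop :=
  c.1 = d.1 ∧ c.2.1 = d.2.1 ∧ c.2.2 ≤ d.2.2

instance : IsPreorder AtomCode.{v} AtomCode.Le where
  refl _ := ⟨rfl, rfl, le_rfl⟩
  trans _ _ _ h h' := ⟨h.1.trans h'.1, h.2.1.trans h'.2.1, h.2.2.trans h'.2.2⟩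

theorem AtomCode.wellQuasiOrdered_le : WellQuasiOrdered AtomCode.Le.{v} :=
  (Finite.wellQuasiOrdered (· = ·)).prod
    ((Finite.wellQuasiOrdered (· = ·)).prod _root_.wellQuasiOrdered_le)

/-- `s` is a well-ordered set or a tail, as prescribed by the last two entries of an atom code. -/
def IsSurAtom (s : Set α) : Bool × Ordinal.{v} → Prop
  | (false, o) => s.WellFoundedOn (· < ·) ∧ otp s = o
  | (true, o) => IsTail s ∧ surRank s = o

theorem IsSurAtom.embeds [Nonempty β] {s : Set α} {t : Set β} {c d : Bool × Ordinal.{v}}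
    (hs : IsSurAtom s c) (ht : IsSurAtom t d) (h₁ : c.1 = d.1) (h₂ : c.2 ≤ d.2) :
    Embeds s t := by
  match c, d, hs, ht with
  | (false, _), (false, _), ⟨hs, hso⟩, ⟨ht, hto⟩ =>
    exact (otp_le_otp_iff hs ht).1 (hso.trans_le (h₂.trans_eq hto.symm))
  | (true, _), (true, _), ⟨hs, hso⟩, ⟨ht, hto⟩ =>
    exact hs.embeds ht (hso.trans_le (h₂.trans_eq hto.symm))

/-- `s` is an atom with the given code. -/
def IsAtomWithCode (s : Set α) : AtomCode.{v} → Prop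
  | (false, c) => IsSurAtom s c
  | (true, c) => IsSurAtom (ofDual ⁻¹' s) c

theorem IsAtomWithCode.embeds [Nonempty β] {s : Set α} {t : Set β} {c d : AtomCode.{v}}
    (hs : IsAtomWithCode s c) (ht : IsAtomWithCode t d) (h : c.Le d) : Embeds s t := by
  match c, d, h with
  | (false, _), (false, _), ⟨_, h₁, h₂⟩ => exact IsSurAtom.embeds hs ht h₁ h₂
  | (true, _), (true, _), ⟨_, h₁, h₂⟩ =>
    have : Nonempty βᵒᵈ := ‹Nonempty β›
    exact .of_dual (IsSurAtom.embeds hs ht h₁ h₂)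

/-- `s` is an ordered sum of atoms with the given codes. -/
inductive IsAtomSum : Set α → List AtomCode.{v} → Prop
  | nil : IsAtomSum ∅ []
  | cons {s t : Set α} {c : AtomCode.{v}} {l : List AtomCode.{v}} :
      IsAtomWithCode s c → IsAtomSum t l → (∀ a ∈ s, ∀ b ∈ t, a < b) →
      IsAtomSum (s ∪ t) (c :: l)

namespace IsAtomSum

theorem append {s t : Set α} {l l' : List AtomCode.{v}} (hs : IsAtomSum s l)
    (ht : IsAtomSum t l') (h : ∀ a ∈ s, ∀ b ∈ t, a < b) : IsAtomSum (s ∪ t) (l ++ l') := by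
  induction hs with
  | nil => simpa
  | cons hc _ hlt ih =>
    rw [union_assoc]
    refine .cons hc (ih fun x hx => h x (.inr hx)) fun x hx y hy => ?_
    exact hy.elim (hlt x hx y) (h x (.inl hx) y)

theorem of_atom {s : Set α} {c : AtomCode.{v}} (h : IsAtomWithCode s c) : IsAtomSum s [c] := by
  simpa using cons h nil

theorem embeds [Nonempty β] {s : Set α} {t : Set β} {l l' : List AtomCode.{v}}
    (hs : IsAtomSum s l) (ht : IsAtomSum t l') (h : List.SublistForall₂ AtomCode.Le l l') :
    Embeds s t := by
  induction h generalizing s t with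
  | nil =>
    cases hs
    exact ⟨fun _ => Classical.arbitrary β, by simp [StrictMonoOn], by simp [MapsTo]⟩
  | cons hcd _ ih =>
    cases hs with | cons ha hb hab =>
    cases ht with | cons ha' hb' hab' =>
    exact (ha.embeds ha' hcd).union (ih hb hb') hab hab'
  | cons_right _ ih =>
    cases ht with | cons _ hb' _ =>
    exact (ih hs hb').mono Subset.rfl subset_union_right

end IsAtomSum

/-- Cut `s` at a point `x` for which the rank of `s ∩ Iio x` is least: then `s ∩ Iio x` is a tail
unless it is empty. -/
theorem IsSurordinal.exists_isSurAtom {s : Set α} (hs : IsSurordinal s) :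
    ∃ t u : Set α, s = t ∪ u ∧ (∀ a ∈ t, ∀ b ∈ u, a < b) ∧
      (t = ∅ ∨ ∃ c, IsSurAtom t c) ∧ ∃ c, IsSurAtom u c := by
  rcases s.eq_empty_or_nonempty with rfl | hne
  · exact ⟨∅, ∅, by simp, by simp, .inl rfl, (false, _), wellFoundedOn_empty _, rfl⟩
  have := hne.to_subtype
  let x : s := Function.argmin fun x : s => surRank (s ∩ Iio (x : α))
  have hmin : ∀ y ∈ s, surRank (s ∩ Iio (x : α)) ≤ surRank (s ∩ Iio y) := fun y hy =>
    Function.argmin_le (fun x : s => surRank (s ∩ Iio (x : α))) ⟨y, hy⟩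
  have hsur : IsSurordinal (s ∩ Iio (x : α)) := hs.of_embeds (.of_subset inter_subset_left)
  refine ⟨s ∩ Iio x, s ∩ Ici x, by rw [← inter_union_distrib_left, Iio_union_Ici, inter_univ],
    fun a ha b hb => lt_of_lt_of_le ha.2 hb.2, ?_, (false, _), hs x x.2, rfl⟩
  refine (s ∩ Iio (x : α)).eq_empty_or_nonempty.imp_right fun hne' =>
    ⟨(true, _), ⟨hsur, hne', fun y hy => ?_⟩, rfl⟩
  refine le_antisymm (surRank_mono hsur inter_subset_left) ((hmin y hy.1).trans_eq ?_)
  rw [inter_assoc, Iio_inter_Iio, min_eq_right (le_of_lt hy.2)]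

theorem IsTame.exists_isAtomSum {s : Set α} (h : IsTame s) : ∃ l, IsAtomSum s l := by
  induction h with
  | sur h =>
    obtain ⟨t, u, rfl, hlt, ht, c, hu⟩ := h.exists_isSurAtom
    have hu' : IsAtomSum u [(false, c)] := .of_atom hu
    rcases ht with rfl | ⟨d, hd⟩
    · exact ⟨_, (empty_union u).symm ▸ hu'⟩
    · have hd' : IsAtomSum t [(false, d)] := .of_atom hd
      exact ⟨_, hd'.append hu' hlt⟩
  | @rev s h =>
    obtain ⟨t, u, hs, hlt, ht, c, hu⟩ := h.dual.exists_isSurAtom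
    have hu' : IsAtomSum (toDual ⁻¹' u) [(true, c)] := .of_atom hu
    obtain rfl : s = toDual ⁻¹' u ∪ toDual ⁻¹' t :=
      (congrArg (toDual ⁻¹' ·) hs).trans (union_comm _ _)
    rcases ht with rfl | ⟨d, hd⟩
    · exact ⟨_, (union_empty (toDual ⁻¹' u)).symm ▸ hu'⟩
    · have hd' : IsAtomSum (toDual ⁻¹' t) [(true, d)] := .of_atom hd
      exact ⟨_, hu'.append hd' fun a ha b hb => hlt _ hb _ ha⟩
  | union _ _ hlt ih₁ ih₂ =>
    obtain ⟨l, hl⟩ := ih₁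
    obtain ⟨l', hl'⟩ := ih₂
    exact ⟨_, hl.append hl' hlt⟩

theorem exists_lt_embeds_of_isTame {X : ℕ → Type v} [∀ n, LinearOrder (X n)]
    [∀ n, Nonempty (X n)] {s : ∀ n, Set (X n)} (hs : ∀ n, IsTame (s n)) :
    ∃ m n, m < n ∧ Embeds (s m) (s n) := by
  choose l hl using fun n => (hs n).exists_isAtomSum
  have higman := PartiallyWellOrderedOn.partiallyWellOrderedOn_sublistForall₂ AtomCode.Le
    (partiallyWellOrderedOn_univ_iff.2 AtomCode.wellQuasiOrdered_le)
  obtain ⟨m, n, hmn, h⟩ := higman fun n => ⟨l n, fun _ _ => trivial⟩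
  exact ⟨m, n, hmn, (hl m).embeds (hl n) h⟩

theorem exists_forall_frequently_embeds_of_isTame {X : ℕ → Type v} [∀ n, LinearOrder (X n)]
    [∀ n, Nonempty (X n)] {s : ∀ n, Set (X n)} (hs : ∀ n, IsTame (s n)) :
    ∃ N, ∀ n ≥ N, ∀ k, ∃ m ≥ k, Embeds (s n) (s m) := by
  by_contra! h
  choose g hg k hk using h
  let c : ℕ → ℕ := fun n => Nat.rec 0 (fun _ d => max d (k d)) n
  have hc : Monotone c := monotone_nat_of_le_succ fun n => le_max_left _ _
  obtain ⟨m, n, hmn, h⟩ := exists_lt_embeds_of_isTame fun n => hs (g (c n))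
  exact hk (c m) _ (((le_max_right _ _).trans (hc hmn)).trans (hg _)) h

end WellQuasiOrder

/-! ### Blowing up points -/

section SumClosed

variable {α ι : Type*} [LinearOrder α] [LinearOrder ι]

/-- A property of suborders which passes to subsets and to ordered sums of two suborders. -/
structure IsSumClosed (P : Set α → Prop) : Prop where
  mono : ∀ {s t}, s ⊆ t → P t → P s
  union : ∀ {s t}, P s → P t → (∀ a ∈ s, ∀ b ∈ t, a < b) → P (s ∪ t)

theorem IsTame.isSumClosed : IsSumClosed (IsTame : Set α → Prop) :=
  ⟨fun h ht => ht.mono h, .union⟩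

theorem IsSumClosed.of_finite_fibers {P : Set α → Prop} (hP : IsSumClosed P) {f : α → ι}
    (hf : Monotone f) {F : Set ι} (hF : F.Finite) {s : Set α}
    (hfib : ∀ i ∈ F, P (s ∩ f ⁻¹' {i})) (hs : P (s \ f ⁻¹' F)) : P s := by
  induction F, hF using Set.Finite.induction_on generalizing s with
  | empty => simpa using hs
  | @insert i F _ _ ih =>
    have hpart : ∀ t : Set ι, i ∉ t → P (s ∩ f ⁻¹' t) := fun t hit => by
      refine ih (fun j hj => hP.mono ?_ (hfib j (.inr hj))) (hP.mono ?_ hs)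
      · exact inter_subset_inter_left _ inter_subset_left
      · rintro x ⟨⟨hxs, hxt⟩, hxF⟩
        exact ⟨hxs, fun h => h.elim (fun hxi => hit (hxi ▸ hxt)) hxF⟩
    have hsplit : s = (s ∩ f ⁻¹' Iio i ∪ s ∩ f ⁻¹' {i}) ∪ s ∩ f ⁻¹' Ioi i := by
      simp only [← inter_union_distrib_left, ← preimage_union, Iio_union_right,
        Iic_union_Ioi, preimage_univ, inter_univ]
    rw [hsplit]
    refine hP.union (hP.union (hpart _ self_notMem_Iio) (hfib i (.inl rfl)) ?_)
      (hpart _ self_notMem_Ioi) ?_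
    · exact fun a ha b hb => hf.reflect_lt (ha.2.trans_eq (Eq.symm hb.2))
    · rintro a (ha | ha) b hb
      · exact hf.reflect_lt (lt_trans ha.2 hb.2)
      · exact hf.reflect_lt (lt_of_eq_of_lt ha.2 hb.2)

theorem IsSurordinal.range_strictMono [WellFoundedLT ι] {u : ι → α} (hu : StrictMono u) :
    IsSurordinal (range u) := by
  refine fun _ _ => WellFoundedOn.subset (wellFoundedOn_range.2 ?_) inter_subset_left
  exact wellFounded_lt.mono fun i j hij => hu.lt_iff_lt.1 hij

theorem embeds_range {β : Type*} [LinearOrder β] [Nonempty ι] {u : ι → α} {w : ι → β}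
    (hu : StrictMono u) (hw : StrictMono w) : Embeds (range u) (range w) := by
  have hinv := Function.leftInverse_invFun hu.injective
  refine ⟨w ∘ Function.invFun u, ?_, fun x _ => ⟨_, rfl⟩⟩
  rintro _ ⟨i, rfl⟩ _ ⟨j, rfl⟩ hij
  simpa only [Function.comp, hinv _] using hw (hu.lt_iff_lt.1 hij)

end SumClosed

section TwoSidedSeq

/-- A copy of `ω + 1 + ω*` in the rationals, with `0` as its two-sided limit. -/
def twoSidedSeq : Set ℚ :=
  range (fun n : ℕ => (-1 / (n + 1) : ℚ)) ∪ {0} ∪ range (fun n : ℕᵒᵈ => (1 / (n.ofDual + 1) : ℚ))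

theorem strictMono_neg_one_div_add_one : StrictMono (fun n : ℕ => (-1 / (n + 1) : ℚ)) := by
  intro m n h
  have hmn : (m : ℚ) < n := by exact_mod_cast h
  simp only [neg_div, neg_lt_neg_iff]
  exact one_div_lt_one_div_of_lt (by positivity) (by linarith)

theorem strictMono_one_div_add_one : StrictMono (fun n : ℕᵒᵈ => (1 / (n.ofDual + 1) : ℚ)) := by
  intro m n h
  have hnm : (n.ofDual : ℚ) < m.ofDual := by exact_mod_cast h
  exact one_div_lt_one_div_of_lt (by positivity) (by linarith)

theorem zero_mem_twoSidedSeq : (0 : ℚ) ∈ twoSidedSeq :=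
  .inl (.inr rfl)

theorem neg_mem_twoSidedSeq {q : ℚ} (h : q ∈ twoSidedSeq) : -q ∈ twoSidedSeq := by
  rcases h with (⟨n, rfl⟩ | h) | ⟨n, rfl⟩
  · exact .inr ⟨toDual n, by simp [neg_div]⟩
  · rw [mem_singleton_iff.1 h, neg_zero]
    exact zero_mem_twoSidedSeq
  · exact .inl (.inl ⟨ofDual n, by simp [neg_div]⟩)

theorem IsSumClosed.twoSidedSeq {P : Set ℚ → Prop} (hP : IsSumClosed P)
    (hneg : P (range (fun n : ℕ => (-1 / (n + 1) : ℚ)))) (hzero : P {0})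
    (hpos : P (range (fun n : ℕᵒᵈ => (1 / (n.ofDual + 1) : ℚ)))) : P twoSidedSeq := by
  have hlt : ∀ n : ℕ, 0 < (1 / (n + 1) : ℚ) := fun n => by positivity
  have hlt' : ∀ n : ℕ, (-1 / (n + 1) : ℚ) < 0 := fun n => by
    simpa only [neg_div, neg_lt_zero] using hlt n
  refine hP.union (hP.union hneg hzero ?_) hpos ?_
  · rintro _ ⟨n, rfl⟩ _ rfl
    exact hlt' n
  · rintro _ (⟨n, rfl⟩ | rfl) _ ⟨m, rfl⟩
    · exact (hlt' n).trans (hlt _)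
    · exact hlt _

theorem isTame_twoSidedSeq : IsTame twoSidedSeq :=
  IsTame.isSumClosed.twoSidedSeq (.sur (.range_strictMono strictMono_neg_one_div_add_one))
    (.of_subsingleton subsingleton_singleton)
    (.rev (IsSurordinal.range_strictMono (ι := ℕ) (α := ℚᵒᵈ)
      (u := fun n => toDual (1 / (n + 1) : ℚ)) fun _ _ h => strictMono_one_div_add_one h))

end TwoSidedSeq

section Blowup

variable {L : Type*}

/-- The suborder `B` of `L` with every point of `R` replaced by a copy of `T ∪ {0}`. The original
point `x` becomes `(x, 0)`. -/
def blowup (R : Set L) (T : Set ℚ) (B : Set L) : Set (L ×ₗ ℚ) :=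
  {p | (ofLex p).1 ∈ B ∧ ((ofLex p).2 = 0 ∨ (ofLex p).1 ∈ R ∧ (ofLex p).2 ∈ T)}

theorem blowup_mono {R R' : Set L} {T T' : Set ℚ} {B B' : Set L} (hR : R ∩ B ⊆ R')
    (hT : T ⊆ T') (hB : B ⊆ B') : blowup R T B ⊆ blowup R' T' B' :=
  fun _ hp => ⟨hB hp.1, hp.2.imp_right fun h => ⟨hR ⟨h.1, hp.1⟩, hT h.2⟩⟩

variable [LinearOrder L]

theorem embeds_blowup_empty (T : Set ℚ) (B : Set L) : Embeds (blowup ∅ T B) B := by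
  refine ⟨fun p => (ofLex p).1, fun p hp q hq hpq => ?_, fun p hp => hp.1⟩
  have hp₀ : (ofLex p).2 = 0 := by simpa only [mem_empty_iff_false, false_and, or_false] using hp.2
  have hq₀ : (ofLex q).2 = 0 := by simpa only [mem_empty_iff_false, false_and, or_false] using hq.2
  exact (Prod.Lex.lt_iff.1 hpq).resolve_right fun h => h.2.ne (hp₀.trans hq₀.symm)

theorem embeds_blowup_singleton (R : Set L) {T : Set ℚ} (hT : 0 ∈ T) (x : L) :
    Embeds (blowup R T {x}) T := by
  refine ⟨fun p => (ofLex p).2, fun p hp q hq hpq => ?_, fun p hp => ?_⟩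
  · exact ((Prod.Lex.lt_iff.1 hpq).resolve_left fun h => h.ne (hp.1.trans hq.1.symm)).2
  · exact hp.2.elim (fun h => by simpa only [h] using hT) fun h => h.2

theorem IsSumClosed.blowup {P : Set (L ×ₗ ℚ) → Prop} (hP : IsSumClosed P) {R : Set L} {T : Set ℚ}
    {B : Set L} (hfin : (B ∩ R).Finite) (hB : P (blowup ∅ T B))
    (hx : ∀ x ∈ B ∩ R, P (blowup R T {x})) : P (blowup R T B) := by
  refine hP.of_finite_fibers (f := fun p => (ofLex p).1) Prod.Lex.monotone_fst hfin
    (fun x hxB => hP.mono ?_ (hx x hxB)) (hP.mono ?_ hB)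
  · exact fun p hp => ⟨hp.2, hp.1.2⟩
  · exact fun p hp => ⟨hp.1.1, hp.1.2.imp_right fun h => (hp.2 ⟨hp.1.1, h.1⟩).elim⟩

theorem embeds_dual_blowup_twoSidedSeq (R J : Set Lᵒᵈ) :
    Embeds (ofDual ⁻¹' blowup (toDual ⁻¹' R) twoSidedSeq (toDual ⁻¹' J))
      (blowup R twoSidedSeq J) := by
  refine ⟨fun p => toLex (toDual (ofLex (ofDual p)).1, -(ofLex (ofDual p)).2),
    fun p _ q _ hpq => ?_, fun p hp => ⟨hp.1, hp.2.imp ?_ ?_⟩⟩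
  · refine Prod.Lex.lt_iff.2 ((Prod.Lex.lt_iff.1 (show ofDual q < ofDual p from hpq)).imp id ?_)
    exact fun h => ⟨congrArg toDual h.1.symm, neg_lt_neg h.2⟩
  · exact fun h => neg_eq_zero.2 h
  · exact fun h => ⟨h.1, neg_mem_twoSidedSeq h.2⟩

end Blowup

/-! ### Cores -/

section Core

variable {L : Type*} [LinearOrder L]

/-- `R` witnesses that `J` absorbs insertions of `ω + 1 + ω*`: the set `R` contains the two-sided
limit points of `J` and meets every non-tame convex subset of `J` in at least three points, yet
`J` still embeds the order obtained by blowing up all points of `R`. -/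
structure IsAbsorbing (J R : Set L) : Prop where
  isTwoSidedLimit_mem : ∀ x ∈ J, IsTwoSidedLimit x → x ∈ R
  embeds : Embeds (blowup R twoSidedSeq J) J
  exists_lt_lt : ∀ I ⊆ J, I.OrdConnected → ¬ IsTame I →
    ∃ x ∈ R ∩ I, ∃ y ∈ R ∩ I, ∃ z ∈ R ∩ I, x < y ∧ y < z

/-- A core is a non-tame convex set which absorbs the insertion of copies of `ω + 1 + ω*`. -/
structure IsCore (J : Set L) : Prop where
  ordConnected : J.OrdConnected
  not_isTame : ¬ IsTame J
  exists_isAbsorbing : ∃ R, IsAbsorbing J R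

theorem IsCore.of_dual {J : Set L} (h : IsCore (ofDual ⁻¹' J)) : IsCore J := by
  obtain ⟨R, hR⟩ := h.exists_isAbsorbing
  refine ⟨ordConnected_dual.1 h.ordConnected, fun hJ => h.not_isTame hJ.dual,
    toDual ⁻¹' R, fun x hx hlim => hR.isTwoSidedLimit_mem _ hx hlim.dual, ?_,
    fun I hI hIc hIt => ?_⟩
  · exact ((embeds_dual_blowup_twoSidedSeq R (ofDual ⁻¹' J)).trans hR.embeds).of_dual
  · obtain ⟨x, hx, y, hy, z, hz, hxy, hyz⟩ := hR.exists_lt_lt (ofDual ⁻¹' I) (fun x hx => hI hx)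
      hIc.dual fun h => hIt h.of_dual
    exact ⟨z, hz, y, hy, x, hx, hyz, hxy⟩

theorem embeds_of_not_wellFoundedOn_gt {s : Set L} (h : ¬ s.WellFoundedOn (· > ·)) :
    Embeds (range (fun n : ℕ => (-1 / (n + 1) : ℚ))) s := by
  simp only [wellFoundedOn_iff_no_descending_seq, not_forall, not_exists, not_not] at h
  obtain ⟨f, hf⟩ := h
  exact (embeds_range strictMono_neg_one_div_add_one (w := f) fun m n hmn =>
    f.map_rel_iff.2 hmn).mono Subset.rfl (range_subset_iff.2 hf)

theorem embeds_of_not_wellFoundedOn_lt {s : Set L} (h : ¬ s.WellFoundedOn (· < ·)) :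
    Embeds (range (fun n : ℕᵒᵈ => (1 / (n.ofDual + 1) : ℚ))) s := by
  simp only [wellFoundedOn_iff_no_descending_seq, not_forall, not_exists, not_not] at h
  obtain ⟨f, hf⟩ := h
  exact (embeds_range strictMono_one_div_add_one (w := fun n => f (ofDual n)) fun m n hmn =>
    f.map_rel_iff.2 hmn).mono Subset.rfl (range_subset_iff.2 fun n => hf _)

end Core

section FitsAbove

variable {L M : Type*} [LinearOrder L] [LinearOrder M]

/-- `t` embeds into an interval `[y n, y m)` for arbitrarily late starting points `y n`. -/
def FitsAbove (y : ℕ → L) (t : Set M) : Prop :=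
  ∀ n, ∃ m > n, Embeds t (Ico (y n) (y m))

theorem FitsAbove.of_embeds {K : Type*} [LinearOrder K] {y : ℕ → L} {s : Set K} {t : Set M}
    (ht : FitsAbove y t) (h : Embeds s t) : FitsAbove y s :=
  fun n => (ht n).imp fun _ hm => ⟨hm.1, h.trans hm.2⟩

theorem FitsAbove.isSumClosed {y : ℕ → L} (hy : Monotone y) :
    IsSumClosed (FitsAbove y : Set M → Prop) := by
  refine ⟨fun h ht => ht.of_embeds (.of_subset h), fun {s t} hs ht hst n => ?_⟩
  have : Nonempty L := ⟨y 0⟩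
  obtain ⟨m, hnm, hm⟩ := hs n
  obtain ⟨k, hmk, hk⟩ := ht m
  refine ⟨k, hnm.trans hmk, (hm.union hk hst fun a ha b hb => ha.2.trans_le hb.1).mono
    Subset.rfl ?_⟩
  exact union_subset (Ico_subset_Ico_right (hy hmk.le)) (Ico_subset_Ico_left (hy hnm.le))

theorem fitsAbove_of_embeds_Icc {y : ℕ → L} (hy : StrictMono y) {t : Set M}
    (h : ∀ n, Embeds t (Icc (y n) (y (n + 1)))) : FitsAbove y t :=
  fun n => ⟨n + 2, by omega, (h n).mono Subset.rfl
    (Icc_subset_Ico_right (hy (Nat.lt_succ_self (n + 1))))⟩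

theorem embeds_iUnion_Ico_of_fitsAbove_fibers {y : ℕ → L} (hy : Monotone y) {S : Set M} {p : M → ℕ}
    (hp : MonotoneOn p S) (h : ∀ i, FitsAbove y {z ∈ S | p z = i}) :
    Embeds S (⋃ m, Ico (y 0) (y m)) := by
  have : Nonempty L := ⟨y 0⟩
  choose m hm hemb using h
  let c : ℕ → ℕ := Nat.rec 0 m
  have hc : Monotone c := monotone_nat_of_le_succ fun i => (hm i (c i)).le
  refine .of_monotoneOn_fibers hp (fun i => Ico (y (c i)) (y (c (i + 1)))) ?_ ?_ ?_
  · exact fun z _ x hx => mem_iUnion.2 ⟨_, (hy (Nat.zero_le _)).trans hx.1, hx.2⟩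
  · exact fun z _ w _ hzw a ha b hb => ha.2.trans_le ((hy (hc hzw)).trans hb.1)
  · exact fun z _ => hemb _ _

end FitsAbove

section RightWild

variable {L : Type v} [LinearOrder L]

/-- A non-tame convex set all of whose initial segments are tame. -/
structure IsRightWild (C : Set L) : Prop where
  ordConnected : C.OrdConnected
  not_isTame : ¬ IsTame C
  isTame_inter_Iic : ∀ y ∈ C, IsTame (C ∩ Iic y)

/-- A cofinal sequence of `C` cutting it into tame blocks, each of which is neither well-ordered nor
reversely well-ordered and embeds into arbitrarily late blocks. -/
structure IsBlockSeq (C : Set L) (y : ℕ → L) : Prop where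
  strictMono : StrictMono y
  mem : ∀ n, y n ∈ C
  exists_lt : ∀ c ∈ C, ∃ n, c < y n
  not_wellFoundedOn_lt : ∀ n, ¬ (Icc (y n) (y (n + 1))).WellFoundedOn (· < ·)
  not_wellFoundedOn_gt : ∀ n, ¬ (Icc (y n) (y (n + 1))).WellFoundedOn (· > ·)
  isTame_Ico : ∀ n, IsTame (Ico (y n) (y (n + 1)))
  frequently_embeds : ∀ n k, ∃ m ≥ k, Embeds (Ico (y n) (y (n + 1))) (Ico (y m) (y (m + 1)))

namespace IsRightWild

variable {C : Set L}

theorem nonempty (hC : IsRightWild C) : C.Nonempty :=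
  nonempty_iff_ne_empty.2 fun h => hC.not_isTame (.of_subsingleton (h ▸ subsingleton_empty))

theorem not_isTame_inter_Ici (hC : IsRightWild C) {y : L} (hy : y ∈ C) :
    ¬ IsTame (C ∩ Ici y) := fun h => hC.not_isTame <| by
  refine IsTame.mono (((hC.isTame_inter_Iic y hy).mono
    (inter_subset_inter_right C Iio_subset_Iic_self)).union h fun a ha b hb => ?_) ?_
  · exact ha.2.trans_le hb.2
  · rw [← inter_union_distrib_left, Iio_union_Ici, inter_univ]

theorem exists_not_wellFoundedOn_gt (hC : IsRightWild C) {y : L} (hy : y ∈ C) :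
    ∃ z ∈ C, ¬ (Icc y z).WellFoundedOn (· > ·) := by
  by_contra! h
  exact hC.not_isTame_inter_Ici hy
    (.rev fun x hx => (h x hx.1).subset fun z hz => ⟨hz.1.2, hz.2⟩)

theorem exists_not_wellFoundedOn_lt (hC : IsRightWild C) {y : L} (hy : y ∈ C) :
    ∃ z ∈ C, ¬ (Icc y z).WellFoundedOn (· < ·) := by
  by_contra! h
  refine hC.not_isTame_inter_Ici hy (.sur fun x _ => WellFoundedOn.subset ?_ inter_subset_left)
  refine wellFoundedOn_iff_no_descending_seq.2 fun f hf => ?_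
  refine wellFoundedOn_iff_no_descending_seq.1 (h (f 0) (hf 0).1) f fun n => ⟨(hf n).2, ?_⟩
  exact n.eq_zero_or_pos.elim (fun h => h ▸ le_rfl) fun hn => (f.map_rel_iff.2 hn).le

theorem exists_gt_not_wellFoundedOn (hC : IsRightWild C) {y : L} (hy : y ∈ C) :
    ∃ z ∈ C, y < z ∧ ¬ (Icc y z).WellFoundedOn (· < ·) ∧ ¬ (Icc y z).WellFoundedOn (· > ·) := by
  obtain ⟨u, hu, hgt⟩ := hC.exists_not_wellFoundedOn_gt hy
  obtain ⟨w, hw, hlt⟩ := hC.exists_not_wellFoundedOn_lt hy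
  have hgt' : ¬ (Icc y (max u w)).WellFoundedOn (· > ·) := fun h =>
    hgt (h.subset (Icc_subset_Icc_right (le_max_left u w)))
  refine ⟨max u w, max_rec' (· ∈ C) hu hw, lt_of_not_ge fun h => ?_, fun h => ?_, hgt'⟩
  · exact hgt' (subsingleton_Icc_of_ge h).wellFoundedOn
  · exact hlt (h.subset (Icc_subset_Icc_right (le_max_right u w)))

theorem exists_lt_seq (hC : IsRightWild C) {y : ℕ → L} (hy : Monotone y) (hyC : ∀ n, y n ∈ C)
    (hlt : ∀ n, ¬ (Icc (y n) (y (n + 1))).WellFoundedOn (· < ·))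
    (hgt : ∀ n, ¬ (Icc (y n) (y (n + 1))).WellFoundedOn (· > ·)) {c : L} (hc : c ∈ C) :
    ∃ n, c < y n := by
  by_contra! h
  obtain ⟨n, hn | hn⟩ := (hC.isTame_inter_Iic c hc).exists_wellFoundedOn_Icc hy fun n x hx =>
    ⟨hC.ordConnected.out (hyC n) (hyC (n + 1)) hx, hx.2.trans (h (n + 1))⟩
  · exact hlt n hn
  · exact hgt n hn

theorem exists_isBlockSeq (hC : IsRightWild C) : ∃ y, IsBlockSeq C y := by
  obtain ⟨x₀, hx₀⟩ := hC.nonempty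
  have : Nonempty L := ⟨x₀⟩
  choose! g hgC hg hlt hgt using fun y hy => hC.exists_gt_not_wellFoundedOn (y := y) hy
  let y : ℕ → L := fun n => g^[n] x₀
  have hyC : ∀ n, y n ∈ C := fun n => Function.Iterate.rec (· ∈ C) hx₀ (fun x hx => hgC x hx) n
  have hsucc : ∀ n, y (n + 1) = g (y n) := fun n => Function.iterate_succ_apply' g n x₀
  have hy : StrictMono y := strictMono_nat_of_lt_succ fun n => hsucc n ▸ hg _ (hyC n)
  have hylt : ∀ n, ¬ (Icc (y n) (y (n + 1))).WellFoundedOn (· < ·) := fun n =>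
    hsucc n ▸ hlt _ (hyC n)
  have hygt : ∀ n, ¬ (Icc (y n) (y (n + 1))).WellFoundedOn (· > ·) := fun n =>
    hsucc n ▸ hgt _ (hyC n)
  have htame : ∀ n, IsTame (Ico (y n) (y (n + 1))) := fun n =>
    (hC.isTame_inter_Iic _ (hyC (n + 1))).mono fun x hx =>
      ⟨hC.ordConnected.out (hyC n) (hyC (n + 1)) (Ico_subset_Icc_self hx), hx.2.le⟩
  obtain ⟨N, hN⟩ := exists_forall_frequently_embeds_of_isTame (X := fun _ => L) htame
  refine ⟨fun n => y (n + N), fun m n h => hy (by omega), fun n => hyC _, fun c hc => ?_, ?_, ?_,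
    ?_, fun n k => ?_⟩
  · obtain ⟨n, hn⟩ := hC.exists_lt_seq hy.monotone hyC hylt hygt hc
    exact ⟨n, hn.trans_le (hy.monotone (Nat.le_add_right n N))⟩
  · exact fun n => add_right_comm n N 1 ▸ hylt (n + N)
  · exact fun n => add_right_comm n N 1 ▸ hygt (n + N)
  · exact fun n => add_right_comm n N 1 ▸ htame (n + N)
  · obtain ⟨m, hm, h⟩ := hN (n + N) (Nat.le_add_left N n) (k + N)
    obtain ⟨j, rfl⟩ := Nat.exists_eq_add_of_le' (show N ≤ m by omega)
    exact ⟨j, by omega, by simpa only [add_right_comm _ N 1] using h⟩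

end IsRightWild

namespace IsBlockSeq

variable {C : Set L} {y : ℕ → L}

theorem Ico_subset (hy : IsBlockSeq C y) (hC : C.OrdConnected) (n m : ℕ) : Ico (y n) (y m) ⊆ C :=
  Ico_subset_Icc_self.trans (hC.out (hy.mem n) (hy.mem m))

theorem fitsAbove_twoSidedSeq (hy : IsBlockSeq C y) : FitsAbove y twoSidedSeq := by
  refine (FitsAbove.isSumClosed hy.strictMono.monotone).twoSidedSeq ?_ ?_ ?_
  · exact fitsAbove_of_embeds_Icc hy.strictMono fun n =>
      embeds_of_not_wellFoundedOn_gt (hy.not_wellFoundedOn_gt n)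
  · have : Nonempty L := ⟨y 0⟩
    exact fun n => ⟨n + 1, n.lt_succ_self, .of_subsingleton subsingleton_singleton
      ⟨y n, le_rfl, hy.strictMono n.lt_succ_self⟩⟩
  · exact fitsAbove_of_embeds_Icc hy.strictMono fun n =>
      embeds_of_not_wellFoundedOn_lt (hy.not_wellFoundedOn_lt n)

theorem fitsAbove_Ico (hy : IsBlockSeq C y) (i : ℕ) : FitsAbove y (Ico (y i) (y (i + 1))) := by
  intro n
  obtain ⟨m, hm, h⟩ := hy.frequently_embeds i n
  exact ⟨m + 1, by omega, h.mono Subset.rfl (Ico_subset_Ico_left (hy.strictMono.monotone hm))⟩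

theorem fitsAbove_blowup_Ico (hy : IsBlockSeq C y) (i : ℕ) :
    FitsAbove y (blowup ({x | IsTwoSidedLimit x} ∪ range y) twoSidedSeq
      (Ico (y i) (y (i + 1)))) := by
  refine (FitsAbove.isSumClosed hy.strictMono.monotone).blowup ?_ ?_ fun x _ => ?_
  · rw [inter_union_distrib_left]
    refine ((hy.isTame_Ico i).finite_isTwoSidedLimit ordConnected_Ico).union
      ((finite_singleton (y i)).subset ?_)
    rintro _ ⟨hk, k, rfl⟩
    have hik : i ≤ k := hy.strictMono.le_iff_le.1 hk.1
    have hki : k < i + 1 := hy.strictMono.lt_iff_lt.1 hk.2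
    exact congrArg y (by omega)
  · exact (hy.fitsAbove_Ico i).of_embeds (embeds_blowup_empty _ _)
  · exact hy.fitsAbove_twoSidedSeq.of_embeds (embeds_blowup_singleton _ zero_mem_twoSidedSeq x)

theorem exists_mem_Ico (hy : IsBlockSeq C y) {x : L} (hx : x ∈ C ∩ Ici (y 0)) :
    ∃ i, x ∈ Ico (y i) (y (i + 1)) := by
  by_contra! h
  have hle : ∀ n, y n ≤ x := Nat.rec hx.2 fun n hn => not_lt.1 fun hlt => h n ⟨hn, hlt⟩
  obtain ⟨n, hn⟩ := hy.exists_lt x hx.1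
  exact (hle n).not_gt hn

theorem isAbsorbing (hy : IsBlockSeq C y) (hC : IsRightWild C) :
    IsAbsorbing (C ∩ Ici (y 0)) ({x | IsTwoSidedLimit x} ∪ range y) := by
  refine ⟨fun x _ hx => .inl hx, ?_, fun I hI hIc hIt => ?_⟩
  · choose! p hp using fun x hx => hy.exists_mem_Ico (x := x) hx
    refine (embeds_iUnion_Ico_of_fitsAbove_fibers hy.strictMono.monotone
      (p := fun q : L ×ₗ ℚ => p (ofLex q).1) (fun q hq r hr hqr => ?_) fun i => ?_).mono
      Subset.rfl (iUnion_subset fun m => ?_)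
    · refine Nat.lt_succ_iff.1 (hy.strictMono.lt_iff_lt.1 ?_)
      exact (hp _ hq.1).1.trans_lt ((Prod.Lex.monotone_fst _ _ hqr).trans_lt (hp _ hr.1).2)
    · exact (hy.fitsAbove_blowup_Ico i).of_embeds (.of_subset fun q hq =>
        ⟨hq.2 ▸ hp _ hq.1.1, hq.1.2⟩)
    · exact fun x hx => ⟨hy.Ico_subset hC.ordConnected 0 m hx, hx.1⟩
  · have hcof : ∀ c ∈ C, ∃ i ∈ I, c < i := by
      by_contra! h
      obtain ⟨c, hc, h⟩ := h
      exact hIt ((hC.isTame_inter_Iic c hc).mono fun i hi => ⟨(hI hi).1, h i hi⟩)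
    obtain ⟨i, hi, -⟩ := hcof _ (hy.mem 0)
    obtain ⟨k, hk⟩ := hy.exists_lt i (hI hi).1
    obtain ⟨j, hj, hkj⟩ := hcof _ (hy.mem (k + 2))
    have hmem : ∀ n, k ≤ n → n ≤ k + 2 → y n ∈ ({x | IsTwoSidedLimit x} ∪ range y) ∩ I :=
      fun n hkn hnk => ⟨.inr ⟨n, rfl⟩, hIc.out hi hj
        ⟨hk.le.trans (hy.strictMono.monotone hkn), (hy.strictMono.monotone hnk).trans hkj.le⟩⟩
    exact ⟨_, hmem k le_rfl (by omega), _, hmem (k + 1) (by omega) (by omega),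
      _, hmem (k + 2) (by omega) le_rfl, hy.strictMono (by omega), hy.strictMono (by omega)⟩

end IsBlockSeq

theorem IsRightWild.exists_isCore {C : Set L} (hC : IsRightWild C) : ∃ J ⊆ C, IsCore J := by
  obtain ⟨y, hy⟩ := hC.exists_isBlockSeq
  exact ⟨C ∩ Ici (y 0), inter_subset_left, hC.ordConnected.inter ordConnected_Ici,
    hC.not_isTame_inter_Ici (hy.mem 0), _, hy.isAbsorbing hC⟩

theorem exists_isCore_of_isTame_inter_Ici {C : Set L} (hC : C.OrdConnected) (hn : ¬ IsTame C)
    (h : ∀ y ∈ C, IsTame (C ∩ Ici y)) : ∃ J ⊆ C, IsCore J := by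
  have hdual : IsRightWild (ofDual ⁻¹' C) :=
    ⟨hC.dual, fun h => hn h.of_dual, fun y hy => (h (ofDual y) hy).dual⟩
  obtain ⟨J, hJ, hcore⟩ := hdual.exists_isCore
  exact ⟨toDual ⁻¹' J, fun x hx => hJ hx, hcore.of_dual⟩

end RightWild

/-! ### Scattered sets -/

section Scattered

variable {β : Type*} [LinearOrder β]

theorem exists_wellFoundedOn_cofinal (Z : Set β) :
    ∃ A ⊆ Z, A.WellFoundedOn (· < ·) ∧ ∀ z ∈ Z, ∃ a ∈ A, z ≤ a := by
  -- The points exceeding all points that precede them in a fixed well-ordering of `β`.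
  refine ⟨{a ∈ Z | ∀ b ∈ Z, WellOrderingRel b a → b < a}, sep_subset _ _, ?_, fun z hz => ?_⟩
  · refine Set.WellFoundedOn.mono' (r := WellOrderingRel) (fun x hx y hy hxy => ?_)
      WellOrderingRel.isWellOrder.wf.wellFoundedOn
    by_contra hn
    by_cases hyx : WellOrderingRel y x
    · exact hxy.asymm (hx.2 y hy.1 hyx)
    · exact hxy.ne (Std.Trichotomous.trichotomous (r := WellOrderingRel) x y hn hyx)
  · obtain ⟨a, ha, hmin⟩ := (WellOrderingRel.isWellOrder (α := β)).wf.has_min (Z ∩ Ici z)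
      ⟨z, hz, le_rfl⟩
    exact ⟨a, ⟨ha.1, fun b hb hba => lt_of_not_ge fun hab =>
      hmin b ⟨hb, le_trans ha.2 hab⟩ hba⟩, ha.2⟩

/-- The suborder `S` is scattered: the rationals do not embed into it. -/
def ScatteredOn (S : Set β) : Prop :=
  ¬ Embeds (univ : Set ℚ) S

theorem embeds_rat_of_dense {D : Set β} (hD : ∀ x ∈ D, ∀ y ∈ D, x < y → (D ∩ Ioo x y).Nonempty)
    {x y : β} (hx : x ∈ D) (hy : y ∈ D) (hxy : x < y) :
    Embeds (univ : Set ℚ) (D ∩ Icc x y) := by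
  have : DenselyOrdered ↥(D ∩ Icc x y) := ⟨fun a b hab => by
    obtain ⟨z, hz, haz, hzb⟩ := hD a a.2.1 b b.2.1 hab
    exact ⟨⟨z, hz, a.2.2.1.trans haz.le, hzb.le.trans b.2.2.2⟩, haz, hzb⟩⟩
  have : Nontrivial ↥(D ∩ Icc x y) :=
    ⟨⟨x, hx, le_rfl, hxy.le⟩, ⟨y, hy, hxy.le, le_rfl⟩, fun h => hxy.ne (congrArg Subtype.val h)⟩
  obtain ⟨f⟩ := Order.embedding_from_countable_to_dense ℚ ↥(D ∩ Icc x y)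
  exact ⟨fun q => f q, fun a _ b _ hab => f.strictMono hab, fun q _ => (f q).2⟩

/-- The relation `V x y` expresses that `x < y` are far apart, in a sense inherited by all pairs
enclosing `x` and `y`. -/
structure IsFarness (V : β → β → Prop) : Prop where
  lt : ∀ {x y}, V x y → x < y
  mono : ∀ {x y a b}, a ≤ x → y ≤ b → V x y → V a b

/-- Any two points of `D` are far apart in the sense of `V`. -/
def IsSpread (V : β → β → Prop) (D : Set β) : Prop :=
  ∀ x ∈ D, ∀ y ∈ D, x < y → V x y

theorem exists_maximal_isSpread {V : β → β → Prop} {D₀ J : Set β} (hD₀ : IsSpread V D₀)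
    (hJ : D₀ ⊆ J) : ∃ D, D₀ ⊆ D ∧ Maximal (fun D => D ⊆ J ∧ IsSpread V D) D := by
  refine zorn_subset_nonempty {D | D ⊆ J ∧ IsSpread V D} (fun c hc hch _ => ?_) D₀ ⟨hJ, hD₀⟩
  refine ⟨⋃₀ c, ⟨sUnion_subset fun s hs => (hc hs).1, ?_⟩, fun s => subset_sUnion_of_mem⟩
  rintro x ⟨s, hs, hx⟩ y ⟨t, ht, hy⟩
  rcases hch.total hs ht with h | h
  · exact (hc ht).2 x (h hx) y hy
  · exact (hc hs).2 x hx y (h hy)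

namespace IsFarness

variable {V : β → β → Prop} {D J : Set β}

theorem isSpread_pair (hV : IsFarness V) {x y : β} (h : V x y) : IsSpread V {x, y} := by
  rintro _ (rfl | rfl) _ (rfl | rfl) hlt
  · exact (hlt.false).elim
  · exact h
  · exact (hlt.asymm (hV.lt h)).elim
  · exact (hlt.false).elim

theorem exists_near_of_maximal (hV : IsFarness V)
    (hD : Maximal (fun D => D ⊆ J ∧ IsSpread V D) D) {z : β} (hz : z ∈ J) :
    ∃ d ∈ D, ¬ V d z ∧ ¬ V z d := by
  by_contra! h
  have hzD : z ∈ D := by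
    refine hD.le_of_ge (y := insert z D) ⟨insert_subset hz hD.prop.1, ?_⟩ (subset_insert _ _)
      (mem_insert _ _)
    rintro x (rfl | hx) y (rfl | hy) hxy
    · exact (hxy.false).elim
    · exact h y hy fun hyx => (hV.lt hyx).asymm hxy
    · by_contra hn
      exact (hV.lt (h x hx hn)).asymm hxy
    · exact hD.prop.2 x hx y hy hxy
  exact (hV.lt (h z hzD fun hzz => (hV.lt hzz).false)).false

theorem exists_mem_Ioo_of_maximal (hV : IsFarness V)
    (hD : Maximal (fun D => D ⊆ J ∧ IsSpread V D) D) {x c y : β} (hc : c ∈ J) (hxc : V x c)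
    (hcy : V c y) : (D ∩ Ioo x y).Nonempty := by
  obtain ⟨d, hd, hdc, hcd⟩ := hV.exists_near_of_maximal hD hc
  exact ⟨d, hd, lt_of_not_ge fun h => hdc (hV.mono h le_rfl hxc),
    lt_of_not_ge fun h => hcd (hV.mono le_rfl h hcy)⟩

end IsFarness

/-- Hausdorff's theorem that scattered orders are built up from points by ordered sums. -/
theorem ScatteredOn.induction {P : Set β → Prop} (hP : IsSumClosed P)
    (hsub : ∀ s : Set β, s.Subsingleton → P s)
    (hcof : ∀ s : Set β, (∀ z ∈ s, P (s ∩ Iic z)) → P s)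
    (hcoi : ∀ s : Set β, (∀ z ∈ s, P (s ∩ Ici z)) → P s) {Z : Set β} (hZ : ScatteredOn Z) :
    P Z := by
  have hfar : IsFarness fun x y => ¬ P (Z ∩ Icc x y) :=
    ⟨fun h => lt_of_not_ge fun hyx => h (hsub _ ((subsingleton_Icc_of_ge hyx).anti
      inter_subset_right)), fun hx hy h h' => h (hP.mono (inter_subset_inter_right _
        (Icc_subset_Icc hx hy)) h')⟩
  have hsplit : ∀ x y, ¬ P (Z ∩ Icc x y) → ∃ c ∈ Z, ¬ P (Z ∩ Icc x c) ∧ ¬ P (Z ∩ Icc c y) := by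
    intro x y hxy
    by_contra! h
    have hlow : P {c ∈ Z ∩ Icc x y | P (Z ∩ Icc x c)} := hcof _ fun c hc =>
      hP.mono (t := Z ∩ Icc x c) (fun z hz => ⟨hz.1.1.1, hz.1.1.2.1, hz.2⟩) hc.2
    have hhigh : P {c ∈ Z ∩ Icc x y | ¬ P (Z ∩ Icc x c)} := hcoi _ fun c hc =>
      hP.mono (t := Z ∩ Icc c y) (fun z hz => ⟨hz.1.1.1, hz.2, hz.1.1.2.2⟩) (h c hc.1.1 hc.2)
    refine hxy (hP.mono (fun c hc => ?_) (hP.union hlow hhigh fun c hc d hd => ?_))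
    · exact (em (P (Z ∩ Icc x c))).imp (⟨hc, ·⟩) (⟨hc, ·⟩)
    · exact lt_of_not_ge fun hdc => hd.2 (hP.mono (inter_subset_inter_right _
        (Icc_subset_Icc_right hdc)) hc.2)
  have hIcc : ∀ x ∈ Z, ∀ y ∈ Z, P (Z ∩ Icc x y) := by
    intro x hx y hy
    by_contra hn
    obtain ⟨D, hxyD, hD⟩ := exists_maximal_isSpread (hfar.isSpread_pair hn) (pair_subset hx hy)
    refine hZ ((embeds_rat_of_dense (D := D) (fun a ha b hb hab => ?_) (hxyD (.inl rfl))
      (hxyD (.inr rfl)) (hfar.lt hn)).mono Subset.rfl (inter_subset_left.trans hD.prop.1))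
    obtain ⟨c, hc, hac, hcb⟩ := hsplit a b (hD.prop.2 a ha b hb hab)
    exact hfar.exists_mem_Ioo_of_maximal hD hc hac hcb
  exact hcof Z fun y hy => hcoi _ fun x hx =>
    hP.mono (t := Z ∩ Icc x y) (fun z hz => ⟨hz.1.1, hz.2, hz.1.2⟩) (hIcc x hx.1 y hy)

theorem isFarness_inter_nonempty (S : Set β) :
    IsFarness fun x y => x < y ∧ (Icc x y ∩ S).Nonempty :=
  ⟨And.left, fun hx hy h => ⟨hx.trans_lt (h.1.trans_le hy),
    h.2.mono (inter_subset_inter_left S (Icc_subset_Icc hx hy))⟩⟩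

theorem ScatteredOn.of_isSpread {S D : Set β} (hS : ScatteredOn S)
    (hD : IsSpread (fun x y => x < y ∧ (Icc x y ∩ S).Nonempty) D) : ScatteredOn D := by
  rintro ⟨f, hf, hfD⟩
  -- Doubling the rationals makes the chosen points of `S` strictly increasing.
  have : Countable (ℚ ×ₗ Fin 2) := inferInstanceAs (Countable (ℚ × Fin 2))
  obtain ⟨e⟩ := Order.embedding_from_countable_to_dense (ℚ ×ₗ Fin 2) ℚ
  have hfe : ∀ {p q}, p < q → f (e p) < f (e q) := fun h => hf trivial trivial (e.strictMono h)
  have hpair : ∀ q : ℚ, f (e (toLex (q, 0))) < f (e (toLex (q, 1))) := fun q =>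
    hfe (Prod.Lex.lt_iff.2 (.inr ⟨rfl, Fin.zero_lt_one⟩))
  choose g hg hgS using fun q =>
    (hD _ (hfD (mem_univ _)) _ (hfD (mem_univ _)) (hpair q)).2
  refine hS ⟨g, fun p _ q _ hpq => ?_, fun q _ => hgS q⟩
  calc g p ≤ f (e (toLex (p, 1))) := (hg p).2
    _ < f (e (toLex (q, 0))) := hfe (Prod.Lex.lt_iff.2 (.inl hpq))
    _ ≤ g q := (hg q).1

end Scattered

/-! ### Families of intervals -/

section IntervalFamily

variable {α β : Type*} [LinearOrder α] [LinearOrder β]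

/-- The intervals `[a, b]` with `V a b` can be halved: any of them contains two adjacent ones. -/
structure IsSplitting (V : α → α → Prop) : Prop where
  lt : ∀ {a b}, V a b → a < b
  exists_between : ∀ {a b}, V a b → ∃ c, V a c ∧ V c b

/-- The intervals `[(g z).1, (g z).2]` for `z ∈ Z` lie in `[a, b]` and satisfy `V`. Intervals
belonging to `z < w` either coincide or lie in the same order as `z` and `w` do, up to a common
endpoint; the latter is guaranteed if `R z w`. -/
structure IsIntervalFamily (V : α → α → Prop) (Z : Set β) (R : β → β → Prop) (a b : α)
    (g : β → α × α) : Prop where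
  rel : ∀ z ∈ Z, V (g z).1 (g z).2
  le_fst : ∀ z ∈ Z, a ≤ (g z).1
  snd_le : ∀ z ∈ Z, (g z).2 ≤ b
  eq_or_le : ∀ z ∈ Z, ∀ w ∈ Z, z < w → g z = g w ∨ (g z).2 ≤ (g w).1
  le : ∀ z ∈ Z, ∀ w ∈ Z, z < w → R z w → (g z).2 ≤ (g w).1

/-- Every interval `[a, b]` with `V a b` contains a copy of `Z` made up of non-overlapping such
intervals. -/
def HasRoom (V : α → α → Prop) (Z : Set β) : Prop :=
  ∀ a b, V a b → ∃ g, IsIntervalFamily V Z ⊤ a b g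

/-- `[a, b]` contains a copy of `A` any two points `x < y` of which satisfy `V x y`. -/
def EmbedsSpread (V : α → α → Prop) (A : Set β) (a b : α) : Prop :=
  ∃ h : β → α, MapsTo h A (Icc a b) ∧ ∀ x ∈ A, ∀ y ∈ A, x < y → V (h x) (h y)

/-- The tame subsets of `Z` have copies, spread with respect to `V`, in all intervals satisfying
`V`. -/
def HasSpreads (V : α → α → Prop) (Z : Set β) : Prop :=
  ∀ A ⊆ Z, IsTame A → ∀ a b, V a b → EmbedsSpread V A a b

variable {V : α → α → Prop} {Z Z' : Set β} {R R' : β → β → Prop} {a b : α} {g : β → α × α}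

theorem IsSplitting.dual (hV : IsSplitting V) :
    IsSplitting fun a b : αᵒᵈ => V b.ofDual a.ofDual :=
  ⟨fun h => hV.lt h, fun h => (hV.exists_between h).imp fun _ => And.symm⟩

theorem HasSpreads.mono (h : HasSpreads V Z) (hZ : Z' ⊆ Z) : HasSpreads V Z' :=
  fun A hA => h A (hA.trans hZ)

theorem HasSpreads.dual (h : HasSpreads V Z) :
    HasSpreads (fun a b : αᵒᵈ => V b.ofDual a.ofDual) (ofDual ⁻¹' Z) := by
  intro A hA hAt a b hab
  obtain ⟨f, hf, hfV⟩ := h (toDual ⁻¹' A) hA hAt.dual _ _ hab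
  exact ⟨toDual ∘ f ∘ ofDual, fun x hx => ⟨(hf hx).2, (hf hx).1⟩,
    fun x hx y hy hxy => hfV _ hy _ hx hxy⟩

namespace IsIntervalFamily

theorem const (h : V a b) (Z : Set β) : IsIntervalFamily V Z ⊥ a b fun _ => (a, b) :=
  ⟨fun _ _ => h, fun _ _ => le_rfl, fun _ _ => le_rfl, fun _ _ _ _ _ => .inl rfl,
    fun _ _ _ _ _ => False.elim⟩

theorem mono (hg : IsIntervalFamily V Z R a b g) (hZ : Z' ⊆ Z) :
    IsIntervalFamily V Z' R a b g :=
  ⟨fun z hz => hg.rel z (hZ hz), fun z hz => hg.le_fst z (hZ hz), fun z hz => hg.snd_le z (hZ hz),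
    fun z hz w hw => hg.eq_or_le z (hZ hz) w (hZ hw), fun z hz w hw => hg.le z (hZ hz) w (hZ hw)⟩

theorem dual (hg : IsIntervalFamily V Z ⊤ a b g) :
    IsIntervalFamily (fun a b : αᵒᵈ => V b.ofDual a.ofDual) (ofDual ⁻¹' Z) ⊤ (toDual b) (toDual a)
      fun z => (toDual (g z.ofDual).2, toDual (g z.ofDual).1) :=
  ⟨fun _ hz => hg.rel _ hz, fun _ hz => hg.snd_le _ hz, fun _ hz => hg.le_fst _ hz,
    fun _ hz _ hw h => .inr (hg.le _ hw _ hz h trivial), fun _ hz _ hw h => hg.le _ hw _ hz h⟩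

theorem refine (hg : IsIntervalFamily V Z R a b g) {h : α × α → β → α × α}
    (hh : ∀ c ∈ g '' Z, IsIntervalFamily V (Z ∩ g ⁻¹' {c}) R' c.1 c.2 (h c)) :
    IsIntervalFamily V Z R' a b fun z => h (g z) z := by
  have hfib : ∀ z ∈ Z, IsIntervalFamily V (Z ∩ g ⁻¹' {g z}) R' (g z).1 (g z).2 (h (g z)) :=
    forall_mem_image.1 hh
  have hle : ∀ z ∈ Z, ∀ w ∈ Z, (g z).2 ≤ (g w).1 → (h (g z) z).2 ≤ (h (g w) w).1 :=
    fun z hz w hw hzw => ((hfib z hz).snd_le z ⟨hz, rfl⟩).trans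
      (hzw.trans ((hfib w hw).le_fst w ⟨hw, rfl⟩))
  refine ⟨fun z hz => (hfib z hz).rel z ⟨hz, rfl⟩,
    fun z hz => (hg.le_fst z hz).trans ((hfib z hz).le_fst z ⟨hz, rfl⟩),
    fun z hz => ((hfib z hz).snd_le z ⟨hz, rfl⟩).trans (hg.snd_le z hz),
    fun z hz w hw hzw => ?_, fun z hz w hw hzw hR => ?_⟩
  · rcases hg.eq_or_le z hz w hw hzw with heq | h
    · simpa only [heq] using (hfib w hw).eq_or_le z ⟨hz, heq⟩ w ⟨hw, rfl⟩ hzw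
    · exact .inr (hle z hz w hw h)
  · rcases hg.eq_or_le z hz w hw hzw with heq | h
    · simpa only [heq] using (hfib w hw).le z ⟨hz, heq⟩ w ⟨hw, rfl⟩ hzw hR
    · exact hle z hz w hw h

theorem exists_of_hasRoom_fibers (hg : IsIntervalFamily V Z R a b g)
    (h : ∀ z ∈ Z, HasRoom V (Z ∩ g ⁻¹' {g z})) : ∃ g, IsIntervalFamily V Z ⊤ a b g := by
  have hfib : ∀ c ∈ g '' Z, ∃ k, IsIntervalFamily V (Z ∩ g ⁻¹' {c}) ⊤ c.1 c.2 k :=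
    forall_mem_image.2 fun z hz => h z hz _ _ (hg.rel z hz)
  have : Nonempty α := ⟨a⟩
  choose! k hk using hfib
  exact ⟨_, hg.refine hk⟩

end IsIntervalFamily

namespace HasRoom

theorem mono (h : HasRoom V Z) (hZ : Z' ⊆ Z) : HasRoom V Z' :=
  fun a b hab => (h a b hab).imp fun _ hg => hg.mono hZ

theorem of_subsingleton (hZ : Z.Subsingleton) : HasRoom V Z :=
  fun a b hab => ⟨fun _ => (a, b), fun _ _ => hab, fun _ _ => le_rfl, fun _ _ => le_rfl,
    fun _ _ _ _ _ => .inl rfl, fun _ hz _ hw hzw => absurd (hZ hz hw) hzw.ne⟩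

theorem dual (h : HasRoom V Z) :
    HasRoom (fun a b : αᵒᵈ => V b.ofDual a.ofDual) (ofDual ⁻¹' Z) := by
  intro a b hab
  obtain ⟨g, hg⟩ := h _ _ hab
  exact ⟨_, hg.dual⟩

theorem isSumClosed (hV : IsSplitting V) : IsSumClosed (HasRoom V : Set β → Prop) := by
  classical
  refine ⟨fun hst h => h.mono hst, fun {s t} hs ht hst a b hab => ?_⟩
  obtain ⟨c, hac, hcb⟩ := hV.exists_between hab
  have hne : ((a, c) : α × α) ≠ (c, b) := fun h => (hV.lt hac).ne (congrArg Prod.fst h)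
  have hts : ∀ z ∈ t, z ∉ s := fun z hz hz' => (hst z hz' z hz).false
  have hg : IsIntervalFamily V (s ∪ t) ⊥ a b fun z => if z ∈ s then (a, c) else (c, b) := by
    refine ⟨fun z _ => ?_, fun z _ => ?_, fun z _ => ?_, ?_, fun _ _ _ _ _ => False.elim⟩
    · split_ifs <;> assumption
    · split_ifs
      exacts [le_rfl, (hV.lt hac).le]
    · split_ifs
      exacts [(hV.lt hcb).le, le_rfl]
    · rintro z (hz | hz) w (hw | hw) hzw
      · simp only [hz, hw, true_or]
      · simp only [hz, hts w hw, if_true, if_false, le_rfl, or_true]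
      · exact absurd hzw (hst w hw z hz).asymm
      · simp only [hts z hz, hts w hw, true_or]
  refine hg.exists_of_hasRoom_fibers fun z _ => ?_
  by_cases hzs : z ∈ s
  · refine hs.mono fun w hw => by_contra fun hws => hne ?_
    simpa [hzs, hws] using hw.2.symm
  · refine ht.mono fun w hw => hw.1.resolve_left fun hws => hne ?_
    simpa [hzs, hws] using hw.2

theorem of_cofinal (hV : IsSplitting V) (hZ : HasSpreads V Z)
    (h : ∀ z ∈ Z, HasRoom V (Z ∩ Iic z)) : HasRoom V Z := by
  by_cases hm : ∃ m ∈ Z, ∀ z ∈ Z, z ≤ m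
  · obtain ⟨m, hm, hmax⟩ := hm
    exact (h m hm).mono fun z hz => ⟨hz, hmax z hz⟩
  push Not at hm
  intro a b hab
  obtain ⟨A, hAZ, hA, hcof⟩ := exists_wellFoundedOn_cofinal Z
  obtain ⟨e, he, heV⟩ := hZ A hAZ (.sur fun _ _ => hA.subset inter_subset_left) a b hab
  have hleast : ∀ P : Set β, (A ∩ P).Nonempty → ∃ x, IsLeast (A ∩ P) x := fun P hP =>
    have hAP : (A ∩ P).IsWF := hA.subset inter_subset_left
    ⟨hAP.min hP, hAP.min_mem hP, fun _ => hAP.min_le hP⟩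
  have hceil : ∀ z ∈ Z, ∃ x, IsLeast (A ∩ Ici z) x := fun z hz => hleast _ (hcof z hz)
  have hsucc : ∀ x ∈ A, ∃ y, IsLeast (A ∩ Ioi x) y := fun x hx => by
    obtain ⟨w, hw, hxw⟩ := hm x (hAZ hx)
    obtain ⟨y, hy, hwy⟩ := hcof w hw
    exact hleast _ ⟨y, hy, hxw.trans_le hwy⟩
  choose! p hp using hceil
  choose! s hs using hsucc
  have hpA : ∀ z ∈ Z, p z ∈ A := fun z hz => (hp z hz).1.1
  have hsA : ∀ z ∈ Z, s (p z) ∈ A := fun z hz => (hs _ (hpA z hz)).1.1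
  have heA : StrictMonoOn e A := fun x hx y hy hxy => hV.lt (heV x hx y hy hxy)
  have hg : IsIntervalFamily V Z ⊥ a b fun z => (e (p z), e (s (p z))) := by
    refine ⟨fun z hz => heV _ (hpA z hz) _ (hsA z hz) (hs _ (hpA z hz)).1.2,
      fun z hz => (he (hpA z hz)).1, fun z hz => (he (hsA z hz)).2, fun z hz w hw hzw => ?_,
      fun _ _ _ _ _ => False.elim⟩
    have hle : p z ≤ p w := (hp z hz).2 ⟨hpA w hw, hzw.le.trans (hp w hw).1.2⟩
    refine hle.eq_or_lt.imp (fun heq => by rw [heq]) fun hlt => ?_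
    exact heA.monotoneOn (hsA z hz) (hpA w hw) ((hs _ (hpA z hz)).2 ⟨hpA w hw, hlt⟩)
  refine hg.exists_of_hasRoom_fibers fun z hz => (h _ (hAZ (hpA z hz))).mono fun w hw => ?_
  have hpw : p w = p z := heA.injOn (hpA w hw.1) (hpA z hz) (congrArg Prod.fst hw.2)
  exact ⟨hw.1, hpw ▸ (hp w hw.1).1.2⟩

theorem of_coinitial (hV : IsSplitting V) (hZ : HasSpreads V Z)
    (h : ∀ z ∈ Z, HasRoom V (Z ∩ Ici z)) : HasRoom V Z :=
  (of_cofinal hV.dual hZ.dual fun z hz => (h z hz).dual).dual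

theorem of_scatteredOn (hV : IsSplitting V) (hZ : HasSpreads V Z) (hsc : ScatteredOn Z) :
    HasRoom V Z := by
  rw [← inter_self Z]
  refine hsc.induction (P := fun s => HasRoom V (Z ∩ s)) ⟨fun hst h => ?_, fun hs ht hst => ?_⟩
    (fun s hs => of_subsingleton (hs.anti inter_subset_right))
    (fun s hs => of_cofinal hV (hZ.mono inter_subset_left) fun z hz => ?_)
    (fun s hs => of_coinitial hV (hZ.mono inter_subset_left) fun z hz => ?_)
  · exact h.mono (inter_subset_inter_right Z hst)
  · rw [inter_union_distrib_left]
    exact (isSumClosed hV).union hs ht fun x hx y hy => hst x hx.2 y hy.2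
  · exact inter_assoc Z s _ ▸ hs z hz.2
  · exact inter_assoc Z s _ ▸ hs z hz.2

end HasRoom

theorem HasSpreads.exists_isIntervalFamily (hV : IsSplitting V) (hZ : HasSpreads V Z) {S : Set β}
    (hS : ScatteredOn S) (hab : V a b) :
    ∃ g, IsIntervalFamily V Z (fun z w => (Icc z w ∩ S).Nonempty) a b g := by
  have hfar := isFarness_inter_nonempty S
  obtain ⟨D, -, hD⟩ := exists_maximal_isSpread (D₀ := ∅) (J := Z)
    (V := fun x y => x < y ∧ (Icc x y ∩ S).Nonempty) (fun x hx => hx.elim) (empty_subset Z)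
  have hroom : HasRoom V D := .of_scatteredOn hV (hZ.mono hD.prop.1) (hS.of_isSpread hD.prop.2)
  obtain ⟨k, hk⟩ := hroom a b hab
  have hnear := fun z (hz : z ∈ Z) => hfar.exists_near_of_maximal hD hz
  choose! r hrD hrz hzr using hnear
  have hlt : ∀ z ∈ Z, ∀ w ∈ Z, z < w → ∀ s ∈ S, (z ≤ s ∧ s ≤ w) ∨ (r w ≤ s ∧ s ≤ r z) →
      r z < r w := by
    intro z hz w hw hzw s hs h
    by_contra! hwz
    have hws : r w < w → r w ≤ s → w < s := fun h h' =>
      lt_of_not_ge fun hsw => hrz w hw ⟨h, s, ⟨h', hsw⟩, hs⟩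
    have hsz : z < r z → z ≤ s → r z < s := fun h h' =>
      lt_of_not_ge fun hsr => hzr z hz ⟨h, s, ⟨h', hsr⟩, hs⟩
    rcases le_or_gt s (r z) with _ | _ <;> rcases lt_or_ge s w with _ | _ <;> grind only
  have hle : ∀ z ∈ Z, ∀ w ∈ Z, z < w → r z ≤ r w := by
    intro z hz w hw hzw
    by_contra! hwz
    obtain ⟨-, s, hs, hsS⟩ := hD.prop.2 _ (hrD w hw) _ (hrD z hz) hwz
    exact (hlt z hz w hw hzw s hsS (.inr hs)).asymm hwz
  refine ⟨k ∘ r, fun z hz => hk.rel _ (hrD z hz), fun z hz => hk.le_fst _ (hrD z hz),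
    fun z hz => hk.snd_le _ (hrD z hz), fun z hz w hw hzw => ?_, fun z hz w hw hzw => ?_⟩
  · exact (hle z hz w hw hzw).eq_or_lt.imp (congrArg k) fun h =>
      hk.le _ (hrD z hz) _ (hrD w hw) h trivial
  · rintro ⟨s, hs, hsS⟩
    exact hk.le _ (hrD z hz) _ (hrD w hw) (hlt z hz w hw hzw s hsS (.inl hs)) trivial

theorem IsIntervalFamily.exists_refinement (hg : IsIntervalFamily V Z R a b g)
    (hV : IsSplitting V) (hZ : HasSpreads V Z) {S : Set β} (hS : ScatteredOn S) :
    ∃ g', IsIntervalFamily V Z (fun z w => (Icc z w ∩ S).Nonempty) a b g' ∧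
      ∀ z ∈ Z, (g z).1 ≤ (g' z).1 ∧ (g' z).2 ≤ (g z).2 := by
  have : Nonempty α := ⟨a⟩
  have hfib : ∀ c ∈ g '' Z, ∃ k, IsIntervalFamily V (Z ∩ g ⁻¹' {c})
      (fun z w => (Icc z w ∩ S).Nonempty) c.1 c.2 k := forall_mem_image.2 fun z hz =>
    (hZ.mono inter_subset_left).exists_isIntervalFamily hV hS (hg.rel z hz)
  choose! k hk using hfib
  refine ⟨_, hg.refine hk, fun z hz => ?_⟩
  have hkz := hk _ (mem_image_of_mem g hz)
  exact ⟨hkz.le_fst z ⟨hz, rfl⟩, hkz.snd_le z ⟨hz, rfl⟩⟩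

theorem HasRoom.of_subset_iUnion (hV : IsSplitting V) (hZ : HasSpreads V Z) {S : ℕ → Set β}
    (hS : ∀ n, ScatteredOn (S n)) (hcov : Z ⊆ ⋃ n, S n) : HasRoom V Z := by
  intro a b hab
  have : Nonempty α := ⟨a⟩
  have hstep : ∀ g, (∃ R, IsIntervalFamily V Z R a b g) → ∀ n, ∃ g',
      IsIntervalFamily V Z (fun z w => (Icc z w ∩ S n).Nonempty) a b g' ∧
        ∀ z ∈ Z, (g z).1 ≤ (g' z).1 ∧ (g' z).2 ≤ (g z).2 :=
    fun g ⟨_, hg⟩ n => hg.exists_refinement hV hZ (hS n)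
  choose! next hnext hnest using hstep
  let g : ℕ → β → α × α := fun n => n.rec (fun _ => (a, b)) fun n g => next g n
  have hg : ∀ n, ∃ R, IsIntervalFamily V Z R a b (g n) := fun n => by
    induction n with
    | zero => exact ⟨_, .const hab Z⟩
    | succ n ih => exact ⟨_, hnext _ ih n⟩
  have hmono : ∀ z ∈ Z, Monotone fun n => (g n z).1 := fun z hz =>
    monotone_nat_of_le_succ fun n => (hnest _ (hg n) n z hz).1
  have hanti : ∀ z ∈ Z, Antitone fun n => (g n z).2 := fun z hz =>
    antitone_nat_of_succ_le fun n => (hnest _ (hg n) n z hz).2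
  have hmem : ∀ z ∈ Z, ∃ n, z ∈ S n := fun z hz => mem_iUnion.1 (hcov hz)
  choose! n hn using hmem
  have hle : ∀ z ∈ Z, ∀ w ∈ Z, z < w → (g (n z + 1) z).2 ≤ (g (n w + 1) w).1 := by
    intro z hz w hw hzw
    rcases le_total (n z) (n w) with h | h
    · exact ((hnext _ (hg _) (n z)).le z hz w hw hzw ⟨z, ⟨le_rfl, hzw.le⟩, hn z hz⟩).trans
        (hmono w hw (Nat.succ_le_succ h))
    · exact (hanti z hz (Nat.succ_le_succ h)).trans
        ((hnext _ (hg _) (n w)).le z hz w hw hzw ⟨w, ⟨hzw.le, le_rfl⟩, hn w hw⟩)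
  have hfam := fun z => hnext _ (hg (n z)) (n z)
  exact ⟨fun z => g (n z + 1) z, fun z => (hfam z).rel z, fun z => (hfam z).le_fst z,
    fun z => (hfam z).snd_le z, fun z hz w hw hzw => .inr (hle z hz w hw hzw),
    fun z hz w hw hzw _ => hle z hz w hw hzw⟩

end IntervalFamily

/-! ### Cores in non-tame convex sets -/

section Far

variable {L : Type*} [LinearOrder L]

/-- The points `a` and `b` are far apart: the interval `[a, b]` is not tame. -/
def IsFar (a b : L) : Prop :=
  ¬ IsTame (Icc a b)

theorem IsTame.of_inter_Iio_of_inter_Ici {s : Set L} {c : L} (h₁ : IsTame (s ∩ Iio c))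
    (h₂ : IsTame (s ∩ Ici c)) : IsTame s :=
  (h₁.union h₂ fun _ hx _ hy => hx.2.trans_le hy.2).mono fun x hx =>
    (lt_or_ge x c).imp (⟨hx, ·⟩) (⟨hx, ·⟩)

theorem isFarness_isFar : IsFarness (IsFar : L → L → Prop) where
  lt h := lt_of_not_ge fun hba => h (.of_subsingleton (subsingleton_Icc_of_ge hba))
  mono ha hb h h' := h (h'.mono (Icc_subset_Icc ha hb))

theorem IsFar.lt {a b : L} (h : IsFar a b) : a < b :=
  isFarness_isFar.lt h

theorem IsFar.or {a b : L} (h : IsFar a b) (c : L) : IsFar a c ∨ IsFar c b := by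
  by_contra! hc
  simp only [IsFar, not_not] at hc
  exact h (.of_inter_Iio_of_inter_Ici (c := c) (hc.1.mono fun x hx => ⟨hx.1.1, hx.2.le⟩)
    (hc.2.mono fun x hx => ⟨hx.2, hx.1.2⟩))

/-- The points of `I` which are not far from `x` on either side. -/
def nearClass (I : Set L) (x : L) : Set L :=
  {y ∈ I | ¬ IsFar x y ∧ ¬ IsFar y x}

theorem ordConnected_nearClass {I : Set L} (hI : I.OrdConnected) (x : L) :
    (nearClass I x).OrdConnected :=
  ⟨fun _ hy _ hz _ hw => ⟨hI.out hy.1 hz.1 hw,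
    fun h => hz.2.1 (isFarness_isFar.mono le_rfl hw.2 h),
    fun h => hy.2.2 (isFarness_isFar.mono hw.1 le_rfl h)⟩⟩

/-- All near classes in `I` are tame. -/
def HasSmallClasses (I : Set L) : Prop :=
  ∀ x ∈ I, IsTame (nearClass I x)

namespace HasSmallClasses

variable {I I' : Set L}

theorem mono (h : HasSmallClasses I) (hI : I' ⊆ I) : HasSmallClasses I' :=
  fun x hx => (h x (hI hx)).mono fun _ hy => ⟨hI hy.1, hy.2⟩

theorem exists_isFar (h : HasSmallClasses I) (hn : ¬ IsTame I) :
    ∃ a ∈ I, ∃ b ∈ I, IsFar a b := by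
  by_contra! hf
  rcases I.eq_empty_or_nonempty with rfl | ⟨x, hx⟩
  · exact hn (.of_subsingleton subsingleton_empty)
  · exact hn ((h x hx).mono fun y hy => ⟨hy, hf x hx y hy, hf y hy x hx⟩)

theorem exists_between {a b : L} (h : HasSmallClasses (Icc a b)) (hab : IsFar a b) :
    ∃ c, IsFar a c ∧ IsFar c b := by
  by_contra! hf
  have hlow : IsTame {y ∈ Icc a b | ¬ IsFar a y} :=
    (h a (left_mem_Icc.2 hab.lt.le)).mono fun y hy =>
      ⟨hy.1, hy.2, fun hya => hy.1.1.not_gt hya.lt⟩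
  have hhigh : IsTame {y ∈ Icc a b | IsFar a y} :=
    (h b (right_mem_Icc.2 hab.lt.le)).mono fun y hy =>
      ⟨hy.1, fun hby => hy.1.2.not_gt hby.lt, hf y hy.2⟩
  refine hab ((hlow.union hhigh fun x hx y hy => lt_of_not_ge fun hyx => ?_).mono fun y hy => ?_)
  · exact hx.2 (isFarness_isFar.mono le_rfl hyx hy.2)
  · exact (em (IsFar a y)).symm.imp (⟨hy, ·⟩) (⟨hy, ·⟩)

end HasSmallClasses

/-- A property of sets `A` and intervals `[a, b]` that becomes easier to satisfy when `A` shrinks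
or the interval grows. -/
def IsIntervalTest (T : Set L → L → L → Prop) : Prop :=
  ∀ ⦃A B a b a' b'⦄, Embeds A B → a' ≤ a → b ≤ b' → T B a b → T A a' b'

theorem isIntervalTest_embeds_Ioo : IsIntervalTest fun (A : Set L) a b => Embeds A (Ioo a b) :=
  fun _ _ _ _ _ _ hAB ha hb h => (hAB.trans h).mono Subset.rfl (Ioo_subset_Ioo ha hb)

theorem isIntervalTest_embedsSpread (V : L → L → Prop) :
    IsIntervalTest fun (A : Set L) a b => EmbedsSpread V A a b := by
  rintro A B a b a' b' ⟨f, hf, hfB⟩ ha hb ⟨g, hg, hgV⟩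
  exact ⟨g ∘ f, fun x hx => Icc_subset_Icc ha hb (hg (hfB hx)),
    fun x hx y hy hxy => hgV _ (hfB hx) _ (hfB hy) (hf hx hy hxy)⟩

/-- Every tame set that passes the test `T` in `[u, w]` passes it in all subintervals whose
endpoints are far apart. -/
def IsStable (T : Set L → L → L → Prop) (u w : L) : Prop :=
  ∀ a b, u ≤ a → b ≤ w → IsFar a b → ∀ A, IsTame A → T A u w → T A a b

theorem IsStable.of_subinterval {T : Set L → L → L → Prop} (hT : IsIntervalTest T)
    {u w u' w' : L} (h : IsStable T u w) (hu : u ≤ u') (hw : w' ≤ w) : IsStable T u' w' :=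
  fun a b ha hb hab A hA hTA =>
    h a b (hu.trans ha) (hb.trans hw) hab A hA (hT (.of_subset Subset.rfl) hu hw hTA)

end Far

section ExistsCore

variable {L : Type v} [LinearOrder L]

theorem exists_isCore_of_not_hasSmallClasses {I : Set L} (hI : I.OrdConnected)
    (h : ¬ HasSmallClasses I) : ∃ J ⊆ I, IsCore J := by
  simp only [HasSmallClasses, not_forall] at h
  obtain ⟨x, -, hx⟩ := h
  have hconn := ordConnected_nearClass hI x
  have hsub : nearClass I x ⊆ I := sep_subset _ _
  suffices ∃ J ⊆ nearClass I x, IsCore J from this.imp fun J hJ => ⟨hJ.1.trans hsub, hJ.2⟩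
  by_cases hleft : IsTame (nearClass I x ∩ Iio x)
  · have hwild : IsRightWild (nearClass I x ∩ Ici x) :=
      ⟨hconn.inter ordConnected_Ici, fun hright => hx (.of_inter_Iio_of_inter_Ici hleft hright),
        fun y hy => (not_not.1 hy.1.2.1).mono fun z hz => ⟨hz.1.2, hz.2⟩⟩
    exact hwild.exists_isCore.imp fun J hJ => ⟨hJ.1.trans inter_subset_left, hJ.2⟩
  · obtain ⟨J, hJ, hcore⟩ := exists_isCore_of_isTame_inter_Ici (hconn.inter ordConnected_Iio)
      hleft fun y hy => (not_not.1 hy.1.2.2).mono fun z hz => ⟨hz.2, le_of_lt hz.1.2⟩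
    exact ⟨J, hJ.trans inter_subset_left, hcore⟩

/- A shrinking sequence of intervals violating stability would yield a sequence of tame sets none
of which embeds into a later one. -/
theorem exists_isStable {T : Set L → L → L → Prop} (hT : IsIntervalTest T) {a b : L}
    (hab : IsFar a b) : ∃ u w, a ≤ u ∧ w ≤ b ∧ IsFar u w ∧ IsStable T u w := by
  by_contra! h
  let Good : L × L → Prop := fun p => a ≤ p.1 ∧ p.2 ≤ b ∧ IsFar p.1 p.2
  have hstep : ∀ p, Good p → ∃ q, Good q ∧ p.1 ≤ q.1 ∧ q.2 ≤ p.2 ∧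
      ∃ A, IsTame A ∧ T A p.1 p.2 ∧ ¬ T A q.1 q.2 := by
    rintro ⟨u, w⟩ ⟨hu, hw, huw⟩
    have hns := h u w hu hw huw
    simp only [IsStable, not_forall] at hns
    obtain ⟨c, d, hc, hd, hcd, A, hA, hTA, hTA'⟩ := hns
    exact ⟨(c, d), ⟨hu.trans hc, hd.trans hw, hcd⟩, hc, hd, A, hA, hTA, hTA'⟩
  have : Nonempty L := ⟨a⟩
  choose! next hgood hfst hsnd A hA hTA hTA' using hstep
  let p : ℕ → L × L := fun n => next^[n] (a, b)
  have hp_succ : ∀ n, p (n + 1) = next (p n) := fun n => Function.iterate_succ_apply' next n _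
  have hp : ∀ n, Good (p n) := fun n => by
    induction n with
    | zero => exact ⟨le_rfl, le_rfl, hab⟩
    | succ n ih => exact hp_succ n ▸ hgood _ ih
  have hmono : Monotone fun n => (p n).1 :=
    monotone_nat_of_le_succ fun n => hp_succ n ▸ hfst _ (hp n)
  have hanti : Antitone fun n => (p n).2 :=
    antitone_nat_of_succ_le fun n => hp_succ n ▸ hsnd _ (hp n)
  obtain ⟨m, n, hmn, hemb⟩ := exists_lt_embeds_of_isTame fun n => hA (p n) (hp n)
  refine hTA' (p m) (hp m) ?_
  rw [← hp_succ]
  exact hT hemb (hmono hmn) (hanti hmn) (hTA (p n) (hp n))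

/-- The interval `[u, w]` looks the same on all scales: it has tame near classes, and the same tame
sets embed into all of its subintervals with endpoints far apart. -/
structure IsSelfSimilar (u w : L) : Prop where
  hasSmallClasses : HasSmallClasses (Icc u w)
  isFar : IsFar u w
  isStable_embeds : IsStable (fun A a b => Embeds A (Ioo a b)) u w
  isStable_embedsSpread : IsStable (EmbedsSpread IsFar) u w

theorem HasSmallClasses.exists_isSelfSimilar {I : Set L} (h : HasSmallClasses I)
    (hI : I.OrdConnected) (hn : ¬ IsTame I) : ∃ u ∈ I, ∃ w ∈ I, IsSelfSimilar u w := by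
  obtain ⟨a, ha, b, hb, hab⟩ := h.exists_isFar hn
  obtain ⟨c, d, hac, hdb, hcd, hst₁⟩ := exists_isStable isIntervalTest_embeds_Ioo hab
  obtain ⟨u, w, hcu, hwd, huw, hst₂⟩ := exists_isStable (isIntervalTest_embedsSpread IsFar) hcd
  have hu : u ∈ I := hI.out ha hb ⟨hac.trans hcu, huw.lt.le.trans (hwd.trans hdb)⟩
  have hw : w ∈ I := hI.out ha hb ⟨(hac.trans hcu).trans huw.lt.le, hwd.trans hdb⟩
  exact ⟨u, hu, w, hw, h.mono (hI.out hu hw), huw,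
    hst₁.of_subinterval isIntervalTest_embeds_Ioo hcu hwd, hst₂⟩

/-- `[a, b]` is a subinterval of `[u, w]` whose endpoints are far apart. -/
def IsFarIn (u w a b : L) : Prop :=
  u ≤ a ∧ b ≤ w ∧ IsFar a b

theorem IsSplitting.isSumClosed_embeds_Ioo {M : Type*} [LinearOrder M] {V : L → L → Prop}
    (hV : IsSplitting V) : IsSumClosed fun s : Set M => ∀ a b, V a b → Embeds s (Ioo a b) := by
  refine ⟨fun hst h a b hab => (h a b hab).mono hst Subset.rfl, fun hs ht hst a b hab => ?_⟩
  obtain ⟨c, hac, hcb⟩ := hV.exists_between hab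
  refine ((hs a c hac).union (ht c b hcb) hst fun x hx y hy => hx.2.trans hy.1).mono Subset.rfl ?_
  exact union_subset (Ioo_subset_Ioo_right (hV.lt hcb).le) (Ioo_subset_Ioo_left (hV.lt hac).le)

namespace IsSelfSimilar

variable {u w a b : L} {D : Set L}

theorem isSplitting (h : IsSelfSimilar u w) : IsSplitting (IsFarIn u w) := by
  refine ⟨fun hab => hab.2.2.lt, fun {a b} ⟨ha, hb, hab⟩ => ?_⟩
  obtain ⟨c, hac, hcb⟩ := (h.hasSmallClasses.mono (Icc_subset_Icc ha hb)).exists_between hab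
  exact ⟨c, ⟨ha, hcb.lt.le.trans hb, hac⟩, ha.trans hac.lt.le, hb, hcb⟩

theorem exists_mem_Ioo (h : IsSelfSimilar u w)
    (hD : Maximal (fun D => D ⊆ Ioo u w ∧ IsSpread IsFar D) D) (hab : IsFarIn u w a b) :
    (D ∩ Ioo a b).Nonempty := by
  obtain ⟨c, hac, hcb⟩ := h.isSplitting.exists_between hab
  exact isFarness_isFar.exists_mem_Ioo_of_maximal hD
    ⟨hac.1.trans_lt hac.2.2.lt, hcb.2.2.lt.trans_le hcb.2.1⟩ hac.2.2 hcb.2.2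

theorem hasSpreads (h : IsSelfSimilar u w) (hDJ : D ⊆ Ioo u w) (hD : IsSpread IsFar D) :
    HasSpreads (IsFarIn u w) D := by
  intro A hA ht a b hab
  obtain ⟨f, hf, hfar⟩ := h.isStable_embedsSpread a b hab.1 hab.2.1 hab.2.2 A ht
    ⟨id, fun x hx => Ioo_subset_Icc_self (hDJ (hA hx)), fun x hx y hy => hD x (hA hx) y (hA hy)⟩
  exact ⟨f, hf, fun x hx y hy hxy =>
    ⟨hab.1.trans (hf hx).1, (hf hy).2.trans hab.2.1, hfar x hx y hy hxy⟩⟩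

theorem embeds_twoSidedSeq (h : IsSelfSimilar u w)
    (hD : Maximal (fun D => D ⊆ Ioo u w ∧ IsSpread IsFar D) D) (hab : IsFarIn u w a b) :
    Embeds twoSidedSeq (Ioo a b) := by
  obtain ⟨c, hac, hcb⟩ := h.isSplitting.exists_between hab
  obtain ⟨d, hd, hd'⟩ := h.exists_mem_Ioo hD hac
  obtain ⟨e, he, he'⟩ := h.exists_mem_Ioo hD hcb
  have hQ := embeds_rat_of_dense (fun x hx y hy hxy => h.exists_mem_Ioo hD
    ⟨(hD.prop.1 hx).1.le, (hD.prop.1 hy).2.le, hD.prop.2 x hx y hy hxy⟩) hd he (hd'.2.trans he'.1)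
  exact hQ.mono (subset_univ _) fun x hx => ⟨hd'.1.trans_le hx.2.1, hx.2.2.trans_lt he'.2⟩

theorem embeds_blowup_nearClass (h : IsSelfSimilar u w)
    (hD : Maximal (fun D => D ⊆ Ioo u w ∧ IsSpread IsFar D) D) {d : L} (hd : d ∈ D)
    (hab : IsFarIn u w a b) :
    Embeds (blowup ({x | IsTwoSidedLimit x} ∪ D) twoSidedSeq (nearClass (Ioo u w) d))
      (Ioo a b) := by
  have htame : IsTame (nearClass (Ioo u w) d) :=
    h.hasSmallClasses.mono Ioo_subset_Icc_self d (hD.prop.1 hd)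
  refine h.isSplitting.isSumClosed_embeds_Ioo.blowup ?_ (fun a b hab => ?_) (fun x _ a b hab => ?_)
    a b hab
  · refine ((htame.finite_isTwoSidedLimit (ordConnected_nearClass ordConnected_Ioo d)).union
      (finite_singleton d)).subset ?_
    rintro x ⟨hx, hlim | hxD⟩
    · exact .inl ⟨hx, hlim⟩
    · rcases lt_trichotomy x d with hlt | heq | hgt
      · exact absurd (hD.prop.2 x hxD d hd hlt) hx.2.2
      · exact .inr heq
      · exact absurd (hD.prop.2 d hd x hxD hgt) hx.2.1
  · exact (embeds_blowup_empty _ _).trans (h.isStable_embeds a b hab.1 hab.2.1 hab.2.2 _ htame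
      (.of_subset (sep_subset _ _)))
  · exact (embeds_blowup_singleton _ zero_mem_twoSidedSeq x).trans (h.embeds_twoSidedSeq hD hab)

/- Each point is sent to a point of `D` near it, and the blown-up near classes of the points of `D`
fit into the pairwise disjoint intervals provided by `HasRoom`. -/
theorem embeds_blowup (h : IsSelfSimilar u w)
    (hD : Maximal (fun D => D ⊆ Ioo u w ∧ IsSpread IsFar D) D) (hroom : HasRoom (IsFarIn u w) D) :
    Embeds (blowup ({x | IsTwoSidedLimit x} ∪ D) twoSidedSeq (Ioo u w)) (Ioo u w) := by
  obtain ⟨g, hg⟩ := hroom u w ⟨le_rfl, le_rfl, h.isFar⟩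
  have hnear := fun x (hx : x ∈ Ioo u w) => isFarness_isFar.exists_near_of_maximal hD hx
  have : Nonempty L := ⟨u⟩
  choose! r hrD hrx hxr using hnear
  have hrmono : MonotoneOn r (Ioo u w) := by
    intro x hx y hy hxy
    by_contra! hlt
    rcases (hD.prop.2 _ (hrD y hy) _ (hrD x hx) hlt).or y with hfar | hfar
    · exact hrx y hy hfar
    · exact hxr x hx (isFarness_isFar.mono hxy le_rfl hfar)
  refine .of_monotoneOn_fibers (p := fun q => r (ofLex q).1)
    (fun p hp q hq hpq => hrmono hp.1 hq.1 (Prod.Lex.monotone_fst p q hpq))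
    (fun d => Ioo (g d).1 (g d).2) (fun p hp => ?_) (fun p hp q hq hpq x hx y hy => ?_)
    fun p hp => ?_
  · exact Ioo_subset_Ioo (hg.le_fst _ (hrD _ hp.1)) (hg.snd_le _ (hrD _ hp.1))
  · exact hx.2.trans ((hg.le _ (hrD _ hp.1) _ (hrD _ hq.1) hpq trivial).trans_lt hy.1)
  · refine (h.embeds_blowup_nearClass hD (hrD _ hp.1) (hg.rel _ (hrD _ hp.1))).mono ?_ Subset.rfl
    rintro q ⟨hq, heq⟩
    exact ⟨⟨hq.1, heq ▸ hrx _ hq.1, heq ▸ hxr _ hq.1⟩, hq.2⟩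

theorem exists_lt_lt (h : IsSelfSimilar u w)
    (hD : Maximal (fun D => D ⊆ Ioo u w ∧ IsSpread IsFar D) D) {I : Set L} (hIJ : I ⊆ Ioo u w)
    (hI : I.OrdConnected) (hn : ¬ IsTame I) :
    ∃ x ∈ D ∩ I, ∃ y ∈ D ∩ I, ∃ z ∈ D ∩ I, x < y ∧ y < z := by
  obtain ⟨a, ha, b, hb, hab⟩ :=
    (h.hasSmallClasses.mono (hIJ.trans Ioo_subset_Icc_self)).exists_isFar hn
  obtain ⟨c, hac, hcb⟩ := h.isSplitting.exists_between ⟨(hIJ ha).1.le, (hIJ hb).2.le, hab⟩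
  obtain ⟨d, hcd, hdb⟩ := h.isSplitting.exists_between hcb
  obtain ⟨x, hx, hax, hxc⟩ := h.exists_mem_Ioo hD hac
  obtain ⟨y, hy, hcy, hyd⟩ := h.exists_mem_Ioo hD hcd
  obtain ⟨z, hz, hdz, hzb⟩ := h.exists_mem_Ioo hD hdb
  have hxy := hxc.trans hcy
  have hyz := hyd.trans hdz
  have hmem : ∀ t, a < t → t < b → t ∈ I := fun t hat htb => hI.out ha hb ⟨hat.le, htb.le⟩
  exact ⟨x, ⟨hx, hmem x hax (hxy.trans (hyz.trans hzb))⟩,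
    y, ⟨hy, hmem y (hax.trans hxy) (hyz.trans hzb)⟩,
    z, ⟨hz, hmem z ((hax.trans hxy).trans hyz) hzb⟩, hxy, hyz⟩

theorem isCore (h : IsSelfSimilar u w) {S : ℕ → Set L} (hS : ∀ n, ScatteredOn (S n))
    (hcov : ⋃ n, S n = univ) : IsCore (Ioo u w) := by
  obtain ⟨D, -, hD⟩ := exists_maximal_isSpread (V := IsFar) (D₀ := ∅)
    (fun x hx => hx.elim) (empty_subset (Ioo u w))
  have hroom : HasRoom (IsFarIn u w) D := .of_subset_iUnion h.isSplitting
    (h.hasSpreads hD.prop.1 hD.prop.2) hS (hcov ▸ subset_univ D)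
  refine ⟨ordConnected_Ioo, fun ht => ?_, {x | IsTwoSidedLimit x} ∪ D, fun x _ hx => .inl hx,
    h.embeds_blowup hD hroom, fun I hIJ hI hn => ?_⟩
  · obtain ⟨c, huc, hcw⟩ := h.isSplitting.exists_between ⟨le_rfl, le_rfl, h.isFar⟩
    obtain ⟨d, hcd, hdw⟩ := h.isSplitting.exists_between hcw
    exact hcd.2.2 (ht.mono (Icc_subset_Ioo huc.2.2.lt hdw.2.2.lt))
  · have hsub : D ∩ I ⊆ ({x | IsTwoSidedLimit x} ∪ D) ∩ I :=
      inter_subset_inter_left I subset_union_right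
    obtain ⟨x, hx, y, hy, z, hz, hlt⟩ := h.exists_lt_lt hD hIJ hI hn
    exact ⟨x, hsub hx, y, hsub hy, z, hsub hz, hlt⟩

end IsSelfSimilar

theorem exists_isCore {S : ℕ → Set L} (hS : ∀ n, ScatteredOn (S n)) (hcov : ⋃ n, S n = univ)
    {I : Set L} (hI : I.OrdConnected) (hn : ¬ IsTame I) : ∃ J ⊆ I, IsCore J := by
  by_cases hs : HasSmallClasses I
  · obtain ⟨u, hu, w, hw, huw⟩ := hs.exists_isSelfSimilar hI hn
    exact ⟨Ioo u w, Ioo_subset_Icc_self.trans (hI.out hu hw), huw.isCore hS hcov⟩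
  · exact exists_isCore_of_not_hasSmallClasses hI hs

end ExistsCore

/-! ### Orders with blown up points -/

section BlowupSUnion

variable {L : Type*} [LinearOrder L] {R : Set L} {T : Set ℚ}

theorem lt_of_ordConnected_of_disjoint {s t : Set L} (hs : s.OrdConnected) (ht : t.OrdConnected)
    (hst : Disjoint s t) {a b : L} (ha : a ∈ s) (hb : b ∈ t) (hab : a < b) :
    ∀ c ∈ s, ∀ d ∈ t, c < d := by
  have hsb : ∀ c ∈ s, c < b := fun c hc => lt_of_not_ge fun hbc =>
    hst.notMem_of_mem_right hb (hs.out ha hc ⟨hab.le, hbc⟩)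
  exact fun c hc d hd => lt_of_not_ge fun hdc =>
    hst.notMem_of_mem_left hc (ht.out hd hb ⟨hdc, (hsb c hc).le⟩)

theorem embeds_blowup_sUnion {c : Set (Set L)} (hdisj : c.PairwiseDisjoint id)
    (hconn : ∀ B ∈ c, B.OrdConnected) (hemb : ∀ B ∈ c, Embeds (blowup R T B) B) :
    Embeds (blowup R T (⋃₀ c)) (⋃₀ c) := by
  rcases isEmpty_or_nonempty L with h | h
  · exact ⟨fun p => (ofLex p).1, fun p => (h.false (ofLex p).1).elim, fun p hp => hp.1⟩
  choose! J hJ hxJ using fun (x : L) (hx : x ∈ ⋃₀ c) => mem_sUnion.1 hx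
  have hne : ∀ B ∈ J '' ⋃₀ c, B.Nonempty := forall_mem_image.2 fun x hx => ⟨x, hxJ x hx⟩
  choose! r hr using hne
  have hrJ : ∀ x ∈ ⋃₀ c, r (J x) ∈ J x := fun x hx => hr _ (mem_image_of_mem J hx)
  have hJr : ∀ x ∈ ⋃₀ c, J (r (J x)) = J x := fun x hx =>
    hdisj.elim_set (hJ _ ⟨_, hJ x hx, hrJ x hx⟩) (hJ x hx) _ (hxJ _ ⟨_, hJ x hx, hrJ x hx⟩)
      (hrJ x hx)
  have hlt : ∀ x ∈ ⋃₀ c, ∀ y ∈ ⋃₀ c, J x ≠ J y → ∀ a ∈ J x, ∀ b ∈ J y, a < b →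
      ∀ a ∈ J x, ∀ b ∈ J y, a < b := fun x hx y hy hxy a ha b hb =>
    lt_of_ordConnected_of_disjoint (hconn _ (hJ x hx)) (hconn _ (hJ y hy))
      (hdisj (hJ x hx) (hJ y hy) hxy) ha hb
  refine .of_monotoneOn_fibers (p := fun p : L ×ₗ ℚ => r (J (ofLex p).1))
    (fun p hp q hq hpq => ?_) J (fun p hp => ?_) (fun p hp q hq hpq => ?_) fun p hp => ?_
  · by_cases h : J (ofLex p).1 = J (ofLex q).1
    · exact (congrArg r h).le
    · have hne : (ofLex p).1 ≠ (ofLex q).1 := fun heq => h (congrArg J heq)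
      exact (hlt _ hp.1 _ hq.1 h _ (hxJ _ hp.1) _ (hxJ _ hq.1)
        ((Prod.Lex.monotone_fst _ _ hpq).lt_of_ne hne) _ (hrJ _ hp.1) _ (hrJ _ hq.1)).le
  · exact (hJr _ hp.1).symm ▸ subset_sUnion_of_mem (hJ _ hp.1)
  · simp only [hJr _ hp.1, hJr _ hq.1]
    exact hlt _ hp.1 _ hq.1 (fun h => hpq.ne (congrArg r h)) _ (hrJ _ hp.1) _ (hrJ _ hq.1) hpq
  · simp only [hJr _ hp.1]
    refine (hemb _ (hJ _ hp.1)).mono (fun q hq => ⟨?_, hq.1.2⟩) Subset.rfl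
    rw [← hJr _ hp.1, ← hq.2, hJr _ hq.1.1]
    exact hxJ _ hq.1.1

end BlowupSUnion

/-- The order obtained from `L` by replacing every point of `R` with a copy of `T ∪ {0}`. -/
abbrev Blowup {L : Type*} (R : Set L) (T : Set ℚ) : Type _ := ↥(blowup R T univ)

namespace Blowup

variable {L : Type*} {R : Set L} {T : Set ℚ}

/-- The point of `L` from which a point of a blowup originates. -/
def fst (p : Blowup R T) : L := (ofLex p.1).1

/-- The position of a point of a blowup within its block. -/
def snd (p : Blowup R T) : ℚ := (ofLex p.1).2

/-- The point at position `q` of the block of `x`. -/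
def mk (x : L) (q : ℚ) (h : q = 0 ∨ x ∈ R ∧ q ∈ T) : Blowup R T := ⟨toLex (x, q), mem_univ x, h⟩

theorem ext {p q : Blowup R T} (h₁ : p.fst = q.fst) (h₂ : p.snd = q.snd) : p = q :=
  Subtype.ext (Prod.ext h₁ h₂)

theorem snd_mem (p : Blowup R T) : p.snd ∈ insert 0 T :=
  p.2.2.imp_right And.right

theorem finite_preimage_fst (hT : T.Finite) (x : L) : {p : Blowup R T | p.fst = x}.Finite := by
  exact .of_finite_image ((hT.insert 0).subset (image_subset_iff.2 fun p _ => p.snd_mem))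
    fun p hp q hq hpq => ext (hp.trans hq.symm) hpq

variable [LinearOrder L]

theorem lt_iff {p q : Blowup R T} : p < q ↔ p.fst < q.fst ∨ p.fst = q.fst ∧ p.snd < q.snd :=
  Prod.Lex.lt_iff

theorem lt_of_fst_lt {p q : Blowup R T} (h : p.fst < q.fst) : p < q :=
  lt_iff.2 (.inl h)

theorem fst_mono : Monotone (fst : Blowup R T → L) :=
  fun _ _ h => Prod.Lex.monotone_fst _ _ h

theorem embeds_mk (s : Set L) : Embeds s {p : Blowup R T | p.fst ∈ s} :=
  .of_strictMono (f := fun x => mk x 0 (.inl rfl)) (fun _ _ h => lt_of_fst_lt h) fun _ hx => hx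

theorem embeds_univ : Embeds (univ : Set L) (univ : Set (Blowup R T)) :=
  (embeds_mk univ).mono Subset.rfl (subset_univ _)

theorem embeds_val (s : Set (Blowup R T)) : Embeds s (blowup R T (fst '' s)) :=
  .of_strictMono (f := Subtype.val) (fun _ _ h => h) fun p hp => ⟨⟨p, hp, rfl⟩, p.2.2⟩

theorem embeds_image_fst (s : Set (Blowup R T)) : Embeds (fst '' s) s := by
  rcases isEmpty_or_nonempty (Blowup R T) with h | h
  · rw [eq_empty_of_isEmpty s, image_empty]
    exact ⟨fun x => mk x 0 (.inl rfl), fun _ h => h.elim, mapsTo_empty _ _⟩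
  choose! f hfs hf using fun (x : L) (hx : x ∈ fst '' s) => hx
  exact ⟨f, fun x hx y hy hxy => lt_of_fst_lt (by rwa [hf x hx, hf y hy]), hfs⟩

theorem ordConnected_image_fst {s : Set (Blowup R T)} (hs : s.OrdConnected) :
    (fst '' s).OrdConnected := by
  refine ⟨?_⟩
  rintro _ ⟨p, hp, rfl⟩ _ ⟨q, hq, rfl⟩ z ⟨hpz, hzq⟩
  rcases hpz.eq_or_lt with hpz | hpz
  · exact ⟨p, hp, hpz⟩
  rcases hzq.eq_or_lt with hzq | hzq
  · exact ⟨q, hq, hzq.symm⟩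
  · exact ⟨mk z 0 (.inl rfl), hs.out hp hq ⟨(lt_of_fst_lt hpz).le, (lt_of_fst_lt hzq).le⟩, rfl⟩

theorem embeds_univ_of_pairwiseDisjoint {c : Set (Set L)} (hdisj : c.PairwiseDisjoint id)
    (hconn : ∀ B ∈ c, B.OrdConnected) (hemb : ∀ B ∈ c, Embeds (blowup R T B) B) (hR : R ⊆ ⋃₀ c) :
    Embeds (univ : Set (Blowup R T)) (univ : Set L) := by
  have hcov : ⋃₀ (c ∪ (fun x => {x}) '' (⋃₀ c)ᶜ) = univ := by
    rw [sUnion_union, sUnion_image, biUnion_of_singleton, union_compl_self]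
  refine (embeds_val univ).trans (.mono (t := ⋃₀ (c ∪ (fun x => {x}) '' (⋃₀ c)ᶜ)) ?_
    (blowup_mono inter_subset_left Subset.rfl (hcov ▸ subset_univ _)) (subset_univ _))
  refine embeds_blowup_sUnion (hdisj.union ?_ ?_) ?_ ?_
  · exact pairwiseDisjoint_range_singleton.subset (image_subset_range _ _)
  · rintro B hB _ ⟨x, hx, rfl⟩ -
    exact disjoint_singleton_right.2 fun hxB => hx ⟨B, hB, hxB⟩
  · rintro B (hB | ⟨x, -, rfl⟩)
    · exact hconn B hB
    · exact ordConnected_singleton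
  · rintro B (hB | ⟨x, hx, rfl⟩)
    · exact hemb B hB
    · refine (embeds_blowup_empty T {x}).mono (blowup_mono ?_ Subset.rfl Subset.rfl) Subset.rfl
      rintro _ ⟨hxR, rfl⟩
      exact hx (hR hxR)

end Blowup

theorem IsTame.blowup {L : Type*} [LinearOrder L] {R : Set L} {T : Set ℚ} (hT : IsTame T)
    (h₀ : 0 ∈ T) {s : Set (Blowup R T)} (hs : IsTame (Blowup.fst '' s))
    (hfin : (Blowup.fst '' s ∩ R).Finite) : IsTame s :=
  (IsTame.isSumClosed.blowup hfin (hs.of_embeds (embeds_blowup_empty _ _)) fun x _ =>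
    hT.of_embeds (embeds_blowup_singleton R h₀ x)).of_embeds (Blowup.embeds_val s)

/-! ### Two-sided limit points of blowups -/

section Limit

theorem IsTwoSidedLimit.map_orderIso {L M : Type*} [LinearOrder L] [LinearOrder M] (e : L ≃o M)
    {x : L} (h : IsTwoSidedLimit x) : IsTwoSidedLimit (e x) := by
  refine ⟨⟨fun hmin => h.1.1 (e.isMin_apply.1 hmin), fun y hy => ?_⟩,
    ⟨fun hmax => h.2.1 (e.isMax_apply.1 hmax), fun y hy => ?_⟩⟩
  · exact h.1.2 (e.symm y) (by simpa using (apply_covBy_apply_iff e.symm).2 hy)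
  · exact h.2.2 (e.symm y) (by simpa using (apply_covBy_apply_iff e.symm).2 hy)

theorem exists_covBy_of_finite_Icc {L : Type*} [LinearOrder L] {a b : L} (h : (Icc a b).Finite)
    (hab : a < b) : ∃ c, a ⋖ c := by
  obtain ⟨c, hc, hmin⟩ := (h.subset Ioc_subset_Icc_self).exists_minimal ⟨b, hab, le_rfl⟩
  exact ⟨c, hc.1, fun z haz hzc => (hmin ⟨haz, hzc.le.trans hc.2⟩ hzc.le).not_gt hzc⟩

theorem IsTwoSidedLimit.infinite_Icc_right {L : Type*} [LinearOrder L] {a b : L}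
    (h : IsTwoSidedLimit a) (hab : a < b) : (Icc a b).Infinite := fun hfin =>
  have ⟨_, hc⟩ := exists_covBy_of_finite_Icc hfin hab
  h.2.2 _ hc

theorem IsTwoSidedLimit.infinite_Icc_left {L : Type*} [LinearOrder L] {a b : L}
    (h : IsTwoSidedLimit b) (hab : a < b) : (Icc a b).Infinite := fun hfin =>
  h.dual.infinite_Icc_right (toDual_lt_toDual.2 hab) (by rwa [Icc_toDual])

end Limit

theorem exists_mem_twoSidedSeq_between {q : ℚ} (h : q < 0) : ∃ r ∈ twoSidedSeq, q < r ∧ r < 0 := by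
  obtain ⟨n, hn⟩ := exists_nat_one_div_lt (neg_pos.2 h)
  have hpos : (0 : ℚ) < 1 / (n + 1) := by positivity
  refine ⟨_, .inl (.inl ⟨n, rfl⟩), ?_, ?_⟩ <;> simp only [neg_div] <;> linarith

namespace Blowup

variable {L : Type*} [LinearOrder L] {R : Set L}

theorem isTwoSidedLimit_mk {x y z : L} (hy : y ∈ R) (hxy : x < y) (hyz : y < z) :
    IsTwoSidedLimit (mk (R := R) (T := twoSidedSeq) y 0 (.inl rfl)) := by
  have hbelow : ∀ p : Blowup R twoSidedSeq, p < mk y 0 (.inl rfl) →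
      ∃ r ∈ twoSidedSeq, r < 0 ∧ (p.fst < y ∨ p.fst = y ∧ p.snd < r) := fun p hp => by
    rcases lt_iff.1 hp with h | ⟨h, hneg⟩
    · obtain ⟨r, hr, -, hr₀⟩ := exists_mem_twoSidedSeq_between (q := -1) (by norm_num)
      exact ⟨r, hr, hr₀, .inl h⟩
    · obtain ⟨r, hr, hpr, hr₀⟩ := exists_mem_twoSidedSeq_between hneg
      exact ⟨r, hr, hr₀, .inr ⟨h, hpr⟩⟩
  have habove : ∀ p : Blowup R twoSidedSeq, mk y 0 (.inl rfl) < p →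
      ∃ r ∈ twoSidedSeq, 0 < r ∧ (y < p.fst ∨ y = p.fst ∧ r < p.snd) := fun p hp => by
    rcases lt_iff.1 hp with h | ⟨h, hpos⟩
    · obtain ⟨r, hr, -, hr₀⟩ := exists_mem_twoSidedSeq_between (q := -1) (by norm_num)
      exact ⟨-r, neg_mem_twoSidedSeq hr, neg_pos.2 hr₀, .inl h⟩
    · obtain ⟨r, hr, hpr, hr₀⟩ := exists_mem_twoSidedSeq_between (neg_lt_zero.2 hpos)
      exact ⟨-r, neg_mem_twoSidedSeq hr, neg_pos.2 hr₀, .inr ⟨h, neg_lt.1 hpr⟩⟩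
  have hmin : mk (R := R) (T := twoSidedSeq) x 0 (.inl rfl) < mk y 0 (.inl rfl) :=
    lt_of_fst_lt hxy
  have hmax : mk (R := R) (T := twoSidedSeq) y 0 (.inl rfl) < mk z 0 (.inl rfl) :=
    lt_of_fst_lt hyz
  refine ⟨⟨hmin.not_isMin, fun p hp => ?_⟩, ⟨hmax.not_isMax, fun p hp => ?_⟩⟩
  · obtain ⟨r, hr, hr₀, hpr⟩ := hbelow p hp.lt
    exact hp.2 (c := mk y r (.inr ⟨hy, hr⟩)) (lt_iff.2 hpr) (lt_iff.2 (.inr ⟨rfl, hr₀⟩))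
  · obtain ⟨r, hr, hr₀, hpr⟩ := habove p hp.lt
    exact hp.2 (c := mk y r (.inr ⟨hy, hr⟩)) (lt_iff.2 (.inr ⟨rfl, hr₀⟩)) (lt_iff.2 hpr)

variable {T : Set ℚ}

theorem finite_Icc (hT : T.Finite) {p q : Blowup R T} (h : p.fst = q.fst) : (Icc p q).Finite :=
  (finite_preimage_fst hT q.fst).subset fun _ hz =>
    le_antisymm (fst_mono hz.2) (h ▸ fst_mono hz.1)

theorem eq_of_fst_eq_of_isTwoSidedLimit (hT : T.Finite) {p q : Blowup R T}
    (hp : IsTwoSidedLimit p) (h : q.fst = p.fst) : q = p := by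
  rcases lt_trichotomy q p with hlt | heq | hlt
  · exact (hp.infinite_Icc_left hlt (finite_Icc hT h)).elim
  · exact heq
  · exact (hp.infinite_Icc_right hlt (finite_Icc hT h.symm)).elim

theorem covBy_of_fst_covBy {p q : Blowup R T} (h : p.fst ⋖ q.fst)
    (hp : ∀ z, z.fst = p.fst → z ≤ p) (hq : ∀ z, z.fst = q.fst → q ≤ z) : p ⋖ q :=
  ⟨lt_of_fst_lt h.lt, fun _ hpz hzq =>
    (h.eq_or_eq (fst_mono hpz.le) (fst_mono hzq.le)).elim (fun hz => (hp _ hz).not_gt hpz)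
      fun hz => (hq _ hz).not_gt hzq⟩

theorem isTwoSidedLimit_fst (hT : T.Finite) {p : Blowup R T} (hp : IsTwoSidedLimit p) :
    IsTwoSidedLimit p.fst := by
  have hfib : ∀ q, q.fst = p.fst → q = p := fun q => eq_of_fst_eq_of_isTwoSidedLimit hT hp
  have hne : ∀ y : L, {q : Blowup R T | q.fst = y}.Nonempty := fun y => ⟨mk y 0 (.inl rfl), rfl⟩
  refine ⟨⟨fun hmin => ?_, fun y hy => ?_⟩, ⟨fun hmax => ?_, fun y hy => ?_⟩⟩
  · refine hp.1.1 fun q hqp => (hfib q ?_).ge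
    exact (fst_mono hqp).antisymm (hmin (fst_mono hqp))
  · obtain ⟨m, rfl, hm⟩ := exists_max_image _ id (finite_preimage_fst (R := R) hT y) (hne y)
    exact hp.1.2 m (covBy_of_fst_covBy hy hm fun q hq => (hfib q hq).ge)
  · refine hp.2.1 fun q hpq => (hfib q ?_).le
    exact (hmax (fst_mono hpq)).antisymm (fst_mono hpq)
  · obtain ⟨m, rfl, hm⟩ := exists_min_image _ id (finite_preimage_fst (R := R) hT y) (hne y)
    exact hp.2.2 m (covBy_of_fst_covBy hy (fun q hq => (hfib q hq).le) hm)

theorem not_isTwoSidedLimit (hT : T.Finite) (hT₀ : (T \ {0}).Nonempty) {p : Blowup R T}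
    (hp : IsTwoSidedLimit p.fst → p.fst ∈ R) : ¬ IsTwoSidedLimit p := by
  intro hlim
  obtain ⟨t, ht, ht₀⟩ := hT₀
  have hfib : ∀ q, q.fst = p.fst → q = p := fun q => eq_of_fst_eq_of_isTwoSidedLimit hT hlim
  have hzero := hfib (mk p.fst 0 (.inl rfl)) rfl
  have hpt := hfib (mk p.fst t (.inr ⟨hp (isTwoSidedLimit_fst hT hlim), ht⟩)) rfl
  exact ht₀ (congrArg snd (hpt.trans hzero.symm))

end Blowup

/-! ### Maximal families of disjoint cores -/

section CoreFamily

variable {L : Type*} [LinearOrder L]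

theorem finite_of_not_exists_lt_lt {s : Set L}
    (h : ¬ ∃ x ∈ s, ∃ y ∈ s, ∃ z ∈ s, x < y ∧ y < z) : s.Finite := by
  rcases s.subsingleton_or_nontrivial with hs | hs
  · exact hs.finite
  obtain ⟨x, hx, y, hy, hxy⟩ := hs.exists_lt
  refine (toFinite {x, y}).subset fun z hz => ?_
  by_contra hn
  simp only [mem_insert_iff, mem_singleton_iff, not_or, ← ne_eq] at hn
  rcases hn.1.lt_or_gt with hzx | hxz
  · exact h ⟨z, hz, x, hx, y, hy, hzx, hxy⟩
  rcases hn.2.lt_or_gt with hzy | hyz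
  · exact h ⟨x, hx, z, hz, y, hy, hxz, hzy⟩
  · exact h ⟨x, hx, y, hy, z, hz, hxy, hyz⟩

theorem ordConnected_sdiff_of_not_subset {K J : Set L} (hK : K.OrdConnected) (hJ : J.OrdConnected)
    (h : ¬ J ⊆ K) : (K \ J).OrdConnected := by
  refine ⟨fun x hx y hy z hz => ⟨hK.out hx.1 hy.1 hz, fun hzJ => h fun w hw => ?_⟩⟩
  refine hK.out hx.1 hy.1 ⟨le_of_not_gt fun hwx => hx.2 ?_, le_of_not_gt fun hyw => hy.2 ?_⟩
  · exact hJ.out hw hzJ ⟨hwx.le, hz.1⟩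
  · exact hJ.out hzJ hw ⟨hz.2, hyw.le⟩

theorem IsTame.of_inter_of_sdiff {K J : Set L} (hJ : J.OrdConnected) (h₁ : IsTame (K ∩ J))
    (h₂ : IsTame (K \ J)) : IsTame K := by
  rcases (K ∩ J).eq_empty_or_nonempty with hKJ | ⟨z, -, hz⟩
  · rwa [← disjoint_iff_inter_eq_empty.2 hKJ |>.sdiff_eq_left]
  have hlt : ∀ a ∈ K \ J, a < z → ∀ b ∈ J, a < b := fun a ha haz b hb =>
    lt_of_not_ge fun hba => ha.2 (hJ.out hb hz ⟨hba, haz.le⟩)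
  have hgt : ∀ a ∈ K \ J, z < a → ∀ b ∈ J, b < a := fun a ha hza b hb =>
    lt_of_not_ge fun hab => ha.2 (hJ.out hz hb ⟨hza.le, hab⟩)
  refine IsTame.mono (((h₂.mono (inter_subset_left (t := Iio z))).union h₁ ?_).union
    (h₂.mono (inter_subset_left (t := Ioi z))) ?_) fun x hx => ?_
  · exact fun a ha b hb => hlt a ha.1 ha.2 b hb.2
  · rintro a (ha | ha) b hb
    · exact ha.2.trans hb.2
    · exact hgt b hb.1 hb.2 a ha.2
  · by_cases hxJ : x ∈ J
    · exact .inl (.inr ⟨hx, hxJ⟩)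
    · have hxz : x ≠ z := fun h => hxJ (h ▸ hz)
      exact hxz.lt_or_gt.imp (fun h => .inl ⟨⟨hx, hxJ⟩, h⟩) fun h => ⟨⟨hx, hxJ⟩, h⟩

theorem finite_setOf_inter_nonempty_not_subset {c : Set (Set L)} (hdisj : c.PairwiseDisjoint id)
    (hconn : ∀ J ∈ c, J.OrdConnected) {K : Set L} (hK : K.OrdConnected) :
    {J ∈ c | (K ∩ J).Nonempty ∧ ¬ J ⊆ K}.Finite := by
  rcases isEmpty_or_nonempty L with _ | _
  · exact toFinite _
  choose! r hrK hrJ using fun J (hJ : J ∈ {J ∈ c | (K ∩ J).Nonempty ∧ ¬ J ⊆ K}) => hJ.2.1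
  refine .of_finite_image (f := r) (finite_of_not_exists_lt_lt ?_) fun J₁ h₁ J₂ h₂ heq =>
    hdisj.elim_set h₁.1 h₂.1 _ (hrJ J₁ h₁) (heq ▸ hrJ J₂ h₂)
  rintro ⟨_, ⟨J₁, h₁, rfl⟩, _, ⟨J₂, h₂, rfl⟩, _, ⟨J₃, h₃, rfl⟩, h₁₂, h₂₃⟩
  have hmem : ∀ J ∈ {J ∈ c | (K ∩ J).Nonempty ∧ ¬ J ⊆ K}, r J ≠ r J₂ → r J ∈ K \ J₂ :=
    fun J hJ hne => ⟨hrK J hJ, fun h => hne (congrArg r (hdisj.elim_set hJ.1 h₂.1 _ (hrJ J hJ) h))⟩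
  exact ((ordConnected_sdiff_of_not_subset hK (hconn J₂ h₂.1) h₂.2.2).out (hmem J₁ h₁ h₁₂.ne)
    (hmem J₃ h₃ h₂₃.ne') ⟨h₁₂.le, h₂₃.le⟩).2 (hrJ J₂ h₂)

theorem ordConnected_and_isTame_of_sdiff_sUnion {G : Set (Set L)} (hG : G.Finite) {K : Set L}
    (hK : K.OrdConnected)
    (h : ∀ J ∈ G, J.OrdConnected ∧ ¬ J ⊆ K ∧ IsTame (K ∩ J)) :
    (K \ ⋃₀ G).OrdConnected ∧ (IsTame (K \ ⋃₀ G) → IsTame K) := by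
  induction G, hG using Set.Finite.induction_on with
  | empty => simpa using hK
  | @insert J G _ _ ih =>
    obtain ⟨hJ, hJK, ht⟩ := h J (mem_insert J G)
    obtain ⟨hconn, htame⟩ := ih fun J' hJ' => h J' (mem_insert_of_mem J hJ')
    rw [sUnion_insert, union_comm, ← sdiff_sdiff]
    exact ⟨ordConnected_sdiff_of_not_subset hconn hJ fun hsub => hJK (hsub.trans sdiff_subset),
      fun hd => htame (.of_inter_of_sdiff hJ (ht.mono (inter_subset_inter_left J sdiff_subset)) hd)⟩

/-- A family of pairwise disjoint cores. -/
structure IsCoreFamily (F : Set (Set L)) : Prop where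
  pairwiseDisjoint : F.PairwiseDisjoint id
  isCore : ∀ J ∈ F, IsCore J

theorem exists_maximal_isCoreFamily (L : Type*) [LinearOrder L] :
    ∃ F : Set (Set L), Maximal IsCoreFamily F := by
  refine zorn_subset {F | IsCoreFamily F} fun c hc hchain => ⟨⋃₀ c, ⟨?_, ?_⟩, fun s hs =>
    subset_sUnion_of_mem hs⟩
  · exact (pairwiseDisjoint_sUnion hchain.directedOn).2 fun s hs => (hc hs).pairwiseDisjoint
  · exact fun J ⟨s, hs, hJ⟩ => (hc hs).isCore J hJ

theorem IsCore.exists_mem_inter_nonempty {F : Set (Set L)} (hF : Maximal IsCoreFamily F) {C : Set L}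
    (hC : IsCore C) : ∃ J ∈ F, (C ∩ J).Nonempty := by
  by_contra! h
  have hinsert : IsCoreFamily (insert C F) :=
    ⟨hF.prop.pairwiseDisjoint.insert fun J hJ _ => disjoint_iff_inter_eq_empty.2 (h J hJ),
      forall_mem_insert.2 ⟨hC, hF.prop.isCore⟩⟩
  have hCF : C ∈ F := hF.le_of_ge hinsert (subset_insert C F) (mem_insert C F)
  refine hC.not_isTame (.of_subsingleton ?_)
  rw [← inter_self C, h C hCF]
  exact subsingleton_empty

end CoreFamily

section Expansion

variable {L : Type v} [LinearOrder L]

theorem exists_mem_not_isTame_inter {S : ℕ → Set L} (hS : ∀ n, ScatteredOn (S n))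
    (hcov : ⋃ n, S n = univ) {F : Set (Set L)} (hF : Maximal IsCoreFamily F) {K : Set L}
    (hK : K.OrdConnected) (hn : ¬ IsTame K) : ∃ J ∈ F, ¬ IsTame (K ∩ J) := by
  by_contra! h
  have hconn : ∀ J ∈ F, J.OrdConnected := fun J hJ => (hF.prop.isCore J hJ).ordConnected
  obtain ⟨hc, ht⟩ := ordConnected_and_isTame_of_sdiff_sUnion
    (finite_setOf_inter_nonempty_not_subset hF.prop.pairwiseDisjoint hconn hK) hK
    fun J hJ => ⟨hconn J hJ.1, hJ.2.2, h J hJ.1⟩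
  obtain ⟨C, hCK, hC⟩ := exists_isCore hS hcov hc (mt ht hn)
  obtain ⟨J, hJ, x, hxC, hxJ⟩ := hC.exists_mem_inter_nonempty hF
  have hJK : J ⊆ K := by
    by_contra hJK
    exact (hCK hxC).2 ⟨J, ⟨hJ, ⟨x, (hCK hxC).1, hxJ⟩, hJK⟩, hxJ⟩
  exact (hF.prop.isCore J hJ).not_isTame (inter_eq_right.2 hJK ▸ h J hJ)

/-- Every non-tame convex set has a non-tame convex subset without two-sided limit points. Among the
orders bi-embeddable with a given non-tame σ-scattered one, some have this property and others do
not. -/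
def HasLimitFreeParts (L : Type*) [LinearOrder L] : Prop :=
  ∀ I : Set L, I.OrdConnected → ¬ IsTame I →
    ∃ J ⊆ I, J.OrdConnected ∧ ¬ IsTame J ∧ ∀ x ∈ J, ¬ IsTwoSidedLimit x

theorem HasLimitFreeParts.of_orderIso {L M : Type*} [LinearOrder L] [LinearOrder M] (e : L ≃o M)
    (h : HasLimitFreeParts L) : HasLimitFreeParts M := by
  intro I hI hn
  have hembeds : ∀ s : Set M, Embeds s (e ⁻¹' s) := fun s =>
    .of_strictMono e.symm.strictMono fun x hx => by
      rwa [mem_preimage, e.apply_symm_apply]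
  obtain ⟨J, hJI, hJ, hJn, hlim⟩ := h (e ⁻¹' I) (hI.preimage_mono e.monotone) fun hI =>
    hn (hI.of_embeds (hembeds I))
  refine ⟨e.symm ⁻¹' J, fun x hx => by simpa using hJI hx, hJ.preimage_mono e.symm.monotone,
    fun ht => hJn ?_, fun x hx hxlim => hlim _ hx (hxlim.map_orderIso e.symm)⟩
  exact ht.of_embeds (.of_strictMono e.strictMono fun x hx => by
    rwa [mem_preimage, e.symm_apply_apply])

theorem IsCore.exists_blowup_not_hasLimitFreeParts {L : Type*} [LinearOrder L] {J : Set L}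
    (hJ : IsCore J) : ∃ R : Set L, Embeds (univ : Set (Blowup R twoSidedSeq)) (univ : Set L) ∧
      ¬ HasLimitFreeParts (Blowup R twoSidedSeq) := by
  obtain ⟨R, hR⟩ := hJ.exists_isAbsorbing
  have hemb : Embeds (univ : Set (Blowup (R ∩ J) twoSidedSeq)) (univ : Set L) := by
    refine Blowup.embeds_univ_of_pairwiseDisjoint (pairwiseDisjoint_singleton J id) ?_ ?_ ?_ <;>
      simp only [mem_singleton_iff, forall_eq, sUnion_singleton]
    · exact hJ.ordConnected
    · exact hR.embeds.mono (blowup_mono (inter_subset_left.trans inter_subset_left) Subset.rfl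
        Subset.rfl) Subset.rfl
    · exact inter_subset_right
  refine ⟨R ∩ J, hemb, fun h => ?_⟩
  obtain ⟨I, hIJ, hI, hn, hlim⟩ := h _ (hJ.ordConnected.preimage_mono Blowup.fst_mono)
    fun h => hJ.not_isTame (h.of_embeds (Blowup.embeds_mk J))
  have hfstJ : Blowup.fst '' I ⊆ J := image_subset_iff.2 hIJ
  have hfew : ¬ ∃ x ∈ R ∩ Blowup.fst '' I, ∃ y ∈ R ∩ Blowup.fst '' I, ∃ z ∈ R ∩ Blowup.fst '' I,
      x < y ∧ y < z := by
    rintro ⟨_, ⟨-, p, hp, rfl⟩, y, ⟨hyR, hy⟩, _, ⟨-, q, hq, rfl⟩, hpy, hyq⟩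
    exact hlim _ (hI.out hp hq ⟨(Blowup.lt_of_fst_lt hpy).le, (Blowup.lt_of_fst_lt hyq).le⟩)
      (Blowup.isTwoSidedLimit_mk ⟨hyR, hfstJ hy⟩ hpy hyq)
  refine hn (.blowup isTame_twoSidedSeq zero_mem_twoSidedSeq ?_ ?_)
  · exact not_not.1 fun hIt => hfew (hR.exists_lt_lt _ hfstJ (Blowup.ordConnected_image_fst hI) hIt)
  · exact (finite_of_not_exists_lt_lt hfew).subset fun x hx => ⟨hx.2.1, hx.1⟩

theorem exists_blowup_hasLimitFreeParts {S : ℕ → Set L} (hS : ∀ n, ScatteredOn (S n))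
    (hcov : ⋃ n, S n = univ) : ∃ R : Set L,
      Embeds (univ : Set (Blowup R {0, 1})) (univ : Set L) ∧
        HasLimitFreeParts (Blowup R {0, 1}) := by
  obtain ⟨F, hF⟩ := exists_maximal_isCoreFamily L
  have hT : ({0, 1} : Set ℚ) ⊆ twoSidedSeq :=
    pair_subset zero_mem_twoSidedSeq (.inr ⟨toDual 0, by norm_num⟩)
  have hconn : ∀ J ∈ F, J.OrdConnected := fun J hJ => (hF.prop.isCore J hJ).ordConnected
  have hemb : ∀ J ∈ F, Embeds (blowup {x ∈ ⋃₀ F | IsTwoSidedLimit x} {0, 1} J) J := fun J hJ => by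
    obtain ⟨R, hR⟩ := (hF.prop.isCore J hJ).exists_isAbsorbing
    exact hR.embeds.mono (blowup_mono (fun x hx => hR.isTwoSidedLimit_mem x hx.2 hx.1.2) hT
      Subset.rfl) Subset.rfl
  refine ⟨{x ∈ ⋃₀ F | IsTwoSidedLimit x}, Blowup.embeds_univ_of_pairwiseDisjoint
    hF.prop.pairwiseDisjoint hconn hemb (sep_subset _ _), fun I hI hn => ?_⟩
  have hfst := Blowup.ordConnected_image_fst hI
  have hfstn : ¬ IsTame (Blowup.fst '' I) := fun h => hn <|
    .blowup (isTame_twoSidedSeq.mono hT) (mem_insert 0 {1}) h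
      ((h.finite_isTwoSidedLimit hfst).subset fun x hx => ⟨hx.1, hx.2.2⟩)
  obtain ⟨J, hJ, hJn⟩ := exists_mem_not_isTame_inter hS hcov hF hfst hfstn
  refine ⟨I ∩ Blowup.fst ⁻¹' J, inter_subset_left,
    hI.inter ((hconn J hJ).preimage_mono Blowup.fst_mono), fun h => hJn ?_, fun p hp =>
    Blowup.not_isTwoSidedLimit (toFinite _) ⟨1, by simp⟩ fun hlim => ⟨⟨J, hJ, hp.2⟩, hlim⟩⟩
  rw [← image_inter_preimage]
  exact h.of_embeds (Blowup.embeds_image_fst _)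

end Expansion

/-! ### Cantor–Schröder–Bernstein orders -/

section CSBOrders

variable {L M : Type v} [LinearOrder L] [LinearOrder M]

theorem Embeds.embedsIn (h : Embeds (univ : Set L) (univ : Set M)) :
    EmbedsIn ((· < ·) : L → L → Prop) ((· < ·) : M → M → Prop) := by
  obtain ⟨f, hf, -⟩ := h
  have hf' : StrictMono f := strictMonoOn_univ.1 hf
  exact ⟨f, hf'.injective, fun _ _ => hf'.lt_iff_lt.symm⟩

theorem CSB.nonempty_orderIso (h : CSB L (· < ·)) (hLM : Embeds (univ : Set L) (univ : Set M))
    (hML : Embeds (univ : Set M) (univ : Set L)) : Nonempty (L ≃o M) := by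
  obtain ⟨f, hf, hlt⟩ := h M (· < ·) inferInstance hLM.embedsIn hML.embedsIn
  have hf' : StrictMono f := fun x y => (hlt x y).1
  exact ⟨hf'.orderIsoOfSurjective f hf.2⟩

theorem Scattered.scatteredOn {s : Set L} (h : Scattered s (· < ·)) : ScatteredOn s := by
  rintro ⟨f, hf, hfs⟩
  have hf' : StrictMono fun q => (⟨f q, hfs (mem_univ q)⟩ : s) := strictMonoOn_univ.1 hf
  exact h ⟨_, hf'.injective, fun _ _ => hf'.lt_iff_lt.symm⟩

theorem CSB.isTame_univ (h : CSB L (· < ·)) (hs : SigmaScattered L (· < ·)) :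
    IsTame (univ : Set L) := by
  obtain ⟨S, hcov, hS⟩ := hs
  have hS' : ∀ n, ScatteredOn (S n) := fun n => Scattered.scatteredOn (hS n)
  by_contra hn
  obtain ⟨J, -, hJ⟩ := exists_isCore hS' hcov ordConnected_univ hn
  obtain ⟨R₁, hR₁, h₁⟩ := hJ.exists_blowup_not_hasLimitFreeParts
  obtain ⟨R₂, hR₂, h₂⟩ := exists_blowup_hasLimitFreeParts hS' hcov
  obtain ⟨e₁⟩ := h.nonempty_orderIso Blowup.embeds_univ hR₁
  obtain ⟨e₂⟩ := h.nonempty_orderIso Blowup.embeds_univ hR₂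
  exact h₁ (h₂.of_orderIso (e₂.symm.trans e₁))

theorem exists_forall_embeds_of_isTame {X : ℕ → Type v} [∀ n, LinearOrder (X n)]
    (hX : ∀ n, IsTame (univ : Set (X n)))
    (hanti : ∀ n, Embeds (univ : Set (X (n + 1))) (univ : Set (X n))) :
    ∃ N, ∀ m ≥ N, ∀ n, Embeds (univ : Set (X m)) (univ : Set (X n)) := by
  have hle : ∀ {m n}, m ≤ n → Embeds (univ : Set (X n)) (univ : Set (X m)) := fun hmn =>
    Nat.le_induction (.of_subset Subset.rfl) (fun n _ ih => (hanti n).trans ih) _ hmn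
  by_cases hne : ∀ n, Nonempty (X n)
  · obtain ⟨N, hN⟩ := exists_forall_frequently_embeds_of_isTame hX
    refine ⟨N, fun m hm n => ?_⟩
    obtain ⟨p, hp, hmp⟩ := hN m hm n
    exact hmp.trans (hle hp)
  · simp only [not_forall, not_nonempty_iff] at hne
    obtain ⟨N, hN⟩ := hne
    refine ⟨N, fun m hm n => ?_⟩
    obtain ⟨f, -⟩ := hle hm
    have : IsEmpty (X m) := f.isEmpty
    exact .of_strictMono (Subsingleton.strictMono isEmptyElim) (mapsTo_univ _ _)

theorem exists_iterate_eq_of_embeds {I : Type u} {X : I → Type v} [∀ i, LinearOrder (X i)]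
    (hX : ∀ i, IsTame (univ : Set (X i))) (hcsb : ∀ i, CSB (X i) (· < ·))
    (hfto : ¬ ∃ J : Set I, J.Infinite ∧ ∀ i ∈ J, ∀ j ∈ J, Nonempty (X i ≃o X j)) {τ : I → I}
    (hτ : ∀ i, Embeds (univ : Set (X (τ i))) (univ : Set (X i))) (i : I) :
    ∃ m n, m ≠ n ∧ τ^[m] i = τ^[n] i := by
  by_contra! h
  have hinj : Function.Injective fun n => τ^[n] i := fun m n hmn =>
    not_not.1 fun hne => h m n hne hmn
  obtain ⟨N, hN⟩ := exists_forall_embeds_of_isTame (X := fun n => X (τ^[n] i)) (fun n => hX _)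
    fun n => by
      rw [Function.iterate_succ_apply']
      exact hτ _
  refine hfto ⟨_, (Ici_infinite N).image hinj.injOn, ?_⟩
  rintro _ ⟨m, hm, rfl⟩ _ ⟨n, hn, rfl⟩
  exact (hcsb _).nonempty_orderIso (hN m hm n) (hN n hn m)

end CSBOrders

/-! ### Condensations of disjoint unions -/

section Condensation

theorem injective_of_rightInverse_of_iterate_eq {I : Type*} {σ τ : I → I}
    (hτ : Function.RightInverse τ σ) (h : ∀ i, ∃ m n, m ≠ n ∧ τ^[m] i = τ^[n] i) :
    Function.Injective σ := by
  have hsurj : Function.Surjective τ := fun i => by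
    obtain ⟨m, n, hne, heq⟩ := h i
    wlog hmn : n < m generalizing m n
    · exact this n m hne.symm heq.symm (by lia)
    have hper : τ^[m - n] i = i := Function.iterate_cancel hτ.injective heq
    obtain ⟨d, hd⟩ := Nat.exists_eq_succ_of_ne_zero (Nat.sub_ne_zero_of_lt hmn)
    rw [hd, Function.iterate_succ_apply'] at hper
    exact ⟨_, hper⟩
  exact (hτ.leftInverse_of_surjective hsurj).injective

variable {I : Type u} {X : I → Type v} [∀ i, LinearOrder (X i)]

theorem unionRel_mk_iff {i : I} {x y : X i} :
    unionRel (fun i => ((· < ·) : X i → X i → Prop)) ⟨i, x⟩ ⟨i, y⟩ ↔ x < y :=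
  ⟨fun ⟨_, h⟩ => h, fun h => ⟨rfl, h⟩⟩

/-- On an empty component `f` gives no information, so `σ` is taken to fix its index. -/
theorem IsCond.exists_componentMap {f : (Σ i, X i) → Σ i, X i}
    (hf : IsCond (unionRel fun i => ((· < ·) : X i → X i → Prop))
      (unionRel fun i => ((· < ·) : X i → X i → Prop)) f) :
    ∃ (σ : I → I) (g : ∀ i, X i → X (σ i)), Function.Surjective σ ∧ (∀ i, StrictMono (g i)) ∧
      ∀ i x, f ⟨i, x⟩ = ⟨σ i, g i x⟩ := by
  have hfst : ∀ (i : I) (x y : X i), (f ⟨i, x⟩).1 = (f ⟨i, y⟩).1 := fun i x y => by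
    rcases lt_trichotomy x y with h | rfl | h
    · exact (hf.2 _ _ (unionRel_mk_iff.2 h)).1
    · rfl
    · exact (hf.2 _ _ (unionRel_mk_iff.2 h)).1.symm
  have hσ : ∀ i, ∃ j, (∀ x : X i, (f ⟨i, x⟩).1 = j) ∧ (IsEmpty (X i) → j = i) := fun i => by
    rcases isEmpty_or_nonempty (X i) with _ | ⟨⟨x⟩⟩
    · exact ⟨i, isEmptyElim, fun _ => rfl⟩
    · exact ⟨_, fun y => hfst i y x, fun h => (h.false x).elim⟩
  choose σ hσ hσ_empty using hσ
  have hg : ∀ i (x : X i), ∃ y : X (σ i), f ⟨i, x⟩ = ⟨σ i, y⟩ := fun i x => by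
    rw [← hσ i x]
    exact ⟨_, rfl⟩
  choose g hg using hg
  refine ⟨σ, g, fun i => ?_, fun i x y hxy => ?_, hg⟩
  · rcases isEmpty_or_nonempty (X i) with hi | ⟨⟨x⟩⟩
    · exact ⟨i, hσ_empty i hi⟩
    · obtain ⟨⟨j, y⟩, hy⟩ := hf.1.2 ⟨i, x⟩
      exact ⟨j, (hσ j y).symm.trans (congrArg Sigma.fst hy)⟩
  · have h := hf.2 _ _ (unionRel_mk_iff.2 hxy)
    rwa [hg, hg, unionRel_mk_iff] at h

theorem isIso_of_injective_componentMap {f : (Σ i, X i) → Σ i, X i} (hf : Function.Bijective f)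
    {σ : I → I} (hσ : Function.Injective σ) {g : ∀ i, X i → X (σ i)}
    (hg : ∀ i, StrictMono (g i)) (hfg : ∀ i x, f ⟨i, x⟩ = ⟨σ i, g i x⟩) :
    IsIso (unionRel fun i => ((· < ·) : X i → X i → Prop))
      (unionRel fun i => ((· < ·) : X i → X i → Prop)) f := by
  refine ⟨hf, fun ⟨i, x⟩ ⟨j, y⟩ => ?_⟩
  rw [hfg, hfg]
  constructor
  · intro h
    obtain rfl : i = j := h.1
    exact unionRel_mk_iff.2 (hg i (unionRel_mk_iff.1 h))
  · intro h
    obtain rfl : i = j := hσ h.1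
    exact unionRel_mk_iff.2 ((hg i).lt_iff_lt.1 (unionRel_mk_iff.1 h))

end Condensation

/-- **Corollary (Statement 17).** Let `X i`, `i ∈ I`, be pairwise disjoint (realized by a
sigma type) σ-scattered CSB linear orders. If the sequence of order types
`⟨otp(X i) : i ∈ I⟩` is finite-to-one (there is no infinite `J ⊆ I` such that `X i ≅ X j`
for all `i, j ∈ J`), then the disjoint union `⋃_{i∈I} X i` is a reversible poset. -/
theorem stmt17 {I : Type u} {X : I → Type v} [∀ i, LinearOrder (X i)]
    (hss : ∀ i, SigmaScattered (X i) (· < ·))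
    (hcsb : ∀ i, CSB (X i) (· < ·))
    (hfto : ¬ ∃ J : Set I, J.Infinite ∧ ∀ i ∈ J, ∀ j ∈ J,
      ∃ f : X i → X j, Function.Bijective f ∧ ∀ x y : X i, x < y ↔ f x < f y) :
    Reversible (unionRel (fun i => ((· < ·) : X i → X i → Prop))) := by
  have htame : ∀ i, IsTame (univ : Set (X i)) := fun i => (hcsb i).isTame_univ (hss i)
  have hfto' : ¬ ∃ J : Set I, J.Infinite ∧ ∀ i ∈ J, ∀ j ∈ J, Nonempty (X i ≃o X j) :=
    fun ⟨J, hJ, hiso⟩ => hfto ⟨J, hJ, fun i hi j hj =>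
      let ⟨e⟩ := hiso i hi j hj
      ⟨e, e.bijective, fun _ _ => e.lt_iff_lt.symm⟩⟩
  intro f hf
  obtain ⟨σ, g, hσ, hg, hfg⟩ := hf.exists_componentMap
  obtain ⟨τ, hτ⟩ := hσ.hasRightInverse
  have hemb : ∀ i, Embeds (univ : Set (X (τ i))) (univ : Set (X i)) := fun i => by
    have h : Embeds (univ : Set (X (τ i))) (univ : Set (X (σ (τ i)))) :=
      .of_strictMono (hg (τ i)) (mapsTo_univ _ _)
    rwa [hτ i] at h
  have hinj : Function.Injective σ :=
    injective_of_rightInverse_of_iterate_eq hτ (exists_iterate_eq_of_embeds htame hcsb hfto' hemb)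
  exact isIso_of_injective_componentMap hf.1 hinj hg hfg
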